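/- arXiv:2208.14126 — 2 statements merged into one kernel-verified Lean document; each statement's English description precedes it below -/
import Mathlib

section
/- Let G be an n-vertex planar triconnected cubic graph with n ≥ 6, equipped with a vertex ordering τ such that every edge (v_i, v_j) satisfies |i − j| < 5 (viewing window ω = 5). Then G always admits a good embedding, i.e., an embedding (crossings interpreted as dummy vertices) with no critical cycle and in which no two coeval edges cross. -/
open Set

namespace GraphStories

/-- Points of the plane. -/
abbrev Pt : Type := ℝ × ℝ

/-- The vertex set of the window graph `G_i` (time `i` is 1-indexed, vertex
`v_j : Fin n` sits at position `j+1` in the ordering `τ`):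
`v_j ∈ G_i` iff `max{1, i-ω+1} ≤ j+1 ≤ i`. -/
def window (n ω i : ℕ) : Set (Fin n) := {j | j.val + 1 ≤ i ∧ i ≤ j.val + ω}

/-- All edges of `G` are visible: `|i - j| < ω` for every edge `(v_i, v_j)`. -/
def Visible (n ω : ℕ) (G : SimpleGraph (Fin n)) : Prop :=
  ∀ u v : Fin n, G.Adj u v → u.val < v.val + ω ∧ v.val < u.val + ω

/-- The data of a drawing: a position for every vertex, and a parametrized curve
for every (ordered) pair of vertices (only the data attached to the vertices and
edges of the relevant subgraph is meaningful). -/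
structure RawDrawing (n : ℕ) where
  pos : Fin n → Pt
  curve : Fin n → Fin n → ℝ → Pt

/-- `γ` (restricted to `[0,1]`) is a Jordan arc from `a` to `b`. -/
def IsArcFrom (γ : ℝ → Pt) (a b : Pt) : Prop :=
  ContinuousOn γ (Icc 0 1) ∧ InjOn γ (Icc 0 1) ∧ γ 0 = a ∧ γ 1 = b

/-- The set of points of an arc. -/
def arcBody (γ : ℝ → Pt) : Set Pt := γ '' Icc (0 : ℝ) 1

/-- The set of interior points of an arc (endpoints removed). -/
def arcInterior (γ : ℝ → Pt) : Set Pt := γ '' Ioo (0 : ℝ) 1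

/-- `D` is a planar drawing of the subgraph of `G` induced by `S`, with the
vertices mapped to (distinct) points of `P` and the edges drawn as Jordan arcs
which pairwise do not intersect except at common endpoints. -/
structure IsPlanarDrawingOn (n : ℕ) (G : SimpleGraph (Fin n)) (S : Set (Fin n))
    (P : Set Pt) (D : RawDrawing n) : Prop where
  pos_mem : ∀ v ∈ S, D.pos v ∈ P
  pos_inj : InjOn D.pos S
  curve_symm : ∀ u v : Fin n, D.curve v u = fun t => D.curve u v (1 - t)
  arc : ∀ u ∈ S, ∀ v ∈ S, G.Adj u v → IsArcFrom (D.curve u v) (D.pos u) (D.pos v)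
  vertex_off_arc : ∀ u ∈ S, ∀ v ∈ S, G.Adj u v → ∀ w ∈ S,
      D.pos w ∉ arcInterior (D.curve u v)
  no_cross : ∀ u ∈ S, ∀ v ∈ S, ∀ x ∈ S, ∀ y ∈ S, G.Adj u v → G.Adj x y →
      s(u, v) ≠ s(x, y) →
      arcInterior (D.curve u v) ∩ arcInterior (D.curve x y) = ∅

/-- `D` is a planar drawing of the subgraph of `G` induced by `S` (anywhere in
the plane). -/
def IsPlanarDrawing (n : ℕ) (G : SimpleGraph (Fin n)) (S : Set (Fin n))
    (D : RawDrawing n) : Prop :=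
  IsPlanarDrawingOn n G S univ D

/-- A realization of the graph story `(G, ω, k, τ)` on the point set `P`:
a sequence `Γ_1, …, Γ_n` of planar drawings of the window graphs `G_1, …, G_n`
on `P` (property R1) such that consecutive drawings restrict identically
(vertex positions and edge arcs) to the common subgraph `G_{i-1} ∩ G_i`
(property R2). -/
structure Realization (n ω : ℕ) (G : SimpleGraph (Fin n)) (P : Set Pt) where
  Γ : ℕ → RawDrawing n
  planar : ∀ i, 1 ≤ i → i ≤ n → IsPlanarDrawingOn n G (window n ω i) P (Γ i)
  pos_eq : ∀ i, 2 ≤ i → i ≤ n → ∀ v ∈ window n ω (i - 1) ∩ window n ω i,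
      (Γ i).pos v = (Γ (i - 1)).pos v
  curve_eq : ∀ i, 2 ≤ i → i ≤ n →
      ∀ u ∈ window n ω (i - 1) ∩ window n ω i,
      ∀ v ∈ window n ω (i - 1) ∩ window n ω i,
      G.Adj u v → (Γ i).curve u v = (Γ (i - 1)).curve u v

/-- The story `(G, ω, k, τ)` admits a realization on the point set `P`. -/
def RealizableOn (n ω : ℕ) (G : SimpleGraph (Fin n)) (P : Set Pt) : Prop :=
  Nonempty (Realization n ω G P)

/-- The story `(G, ω, k, τ)` is realizable: it admits a realization on some set
of `ω + k` points. -/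
def Realizable (n ω k : ℕ) (G : SimpleGraph (Fin n)) : Prop :=
  ∃ P : Finset Pt, P.card = ω + k ∧ RealizableOn n ω G ↑P


/-- The set of points of the plane used by the drawing `D` of the subgraph of
`G` induced by `S` (vertex points and edge arcs). -/
def drawingImage (n : ℕ) (G : SimpleGraph (Fin n)) (S : Set (Fin n))
    (D : RawDrawing n) : Set Pt :=
  (D.pos '' S) ∪
    ⋃ (u : Fin n) (v : Fin n) (_ : u ∈ S) (_ : v ∈ S) (_ : G.Adj u v),
      arcBody (D.curve u v)

/-- `D` is a drawing (an "embedding", possibly with crossings, which are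
interpreted as dummy vertices) of the whole graph `G`: vertices are mapped to
distinct points and edges to Jordan arcs joining their endpoints and avoiding
the other vertices. -/
structure IsDrawing (n : ℕ) (G : SimpleGraph (Fin n)) (D : RawDrawing n) : Prop where
  pos_inj : Function.Injective D.pos
  curve_symm : ∀ u v : Fin n, D.curve v u = fun t => D.curve u v (1 - t)
  arc : ∀ u v : Fin n, G.Adj u v → IsArcFrom (D.curve u v) (D.pos u) (D.pos v)
  vertex_off_arc : ∀ u v : Fin n, G.Adj u v → ∀ w : Fin n,
      D.pos w ∉ arcInterior (D.curve u v)

/-- Two vertices are coeval if some window graph `G_i` contains both. -/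
def Coeval (n ω : ℕ) (u v : Fin n) : Prop :=
  ∃ i, 1 ≤ i ∧ i ≤ n ∧ u ∈ window n ω i ∧ v ∈ window n ω i

/-- Two edges are coeval if some window graph `G_i` contains both of them. -/
def CoevalEdges (n ω : ℕ) (u v x y : Fin n) : Prop :=
  ∃ i, 1 ≤ i ∧ i ≤ n ∧ u ∈ window n ω i ∧ v ∈ window n ω i ∧
    x ∈ window n ω i ∧ y ∈ window n ω i

/-- A vertex is coeval with a cycle `c` if some window graph `G_i` contains the
vertex together with the whole cycle. -/
def CoevalWithCycle (n ω : ℕ) {G : SimpleGraph (Fin n)} {r : Fin n}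
    (c : G.Walk r r) (v : Fin n) : Prop :=
  ∃ i, 1 ≤ i ∧ i ≤ n ∧ v ∈ window n ω i ∧ ∀ u ∈ c.support, u ∈ window n ω i

/-- The set of points of the plane covered by the drawing of the cycle `c`. -/
def cycleImage (n : ℕ) {G : SimpleGraph (Fin n)} {r : Fin n}
    (D : RawDrawing n) (c : G.Walk r r) : Set Pt :=
  {p | ∃ u w : Fin n, s(u, w) ∈ c.edges ∧ p ∈ arcBody (D.curve u w)}

/-- The region of the plane lying inside a compact plane set `X`: the points
off `X` whose connected component in the complement of `X` is bounded. -/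
def insideRegion (X : Set Pt) : Set Pt :=
  {p | p ∉ X ∧ Bornology.IsBounded (connectedComponentIn Xᶜ p)}

/-- In the drawing `D`, the cycle `c` is critical for the vertex `v`
(window size `ω`): `v` is coeval with `c` and `v ∈ G(C) \ C`, i.e. `v` is not
on `c` and is drawn inside `c`. -/
def CriticalFor (n ω : ℕ) {G : SimpleGraph (Fin n)} {r : Fin n}
    (D : RawDrawing n) (c : G.Walk r r) (v : Fin n) : Prop :=
  CoevalWithCycle n ω c v ∧ v ∉ c.support ∧
    D.pos v ∈ insideRegion (cycleImage n D c)

/-- `c` is a critical cycle of `G` in the drawing `D`. -/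
def IsCriticalCycle (n ω : ℕ) {G : SimpleGraph (Fin n)} {r : Fin n}
    (D : RawDrawing n) (c : G.Walk r r) : Prop :=
  c.IsCycle ∧ ∃ v, CriticalFor n ω D c v

/-- `c` is the external cycle of the drawing `D` of `G`: nothing of the drawing
lies strictly outside `c` (every point of the drawing is on `c` or inside
`c`). -/
def IsExternalCycle (n : ℕ) (G : SimpleGraph (Fin n)) {r : Fin n}
    (D : RawDrawing n) (c : G.Walk r r) : Prop :=
  c.IsCycle ∧ ∀ p ∈ drawingImage n G univ D,
    p ∈ cycleImage n D c ∨ p ∈ insideRegion (cycleImage n D c)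

/-- A good embedding of `G` (window size `ω`): a drawing with no critical cycle
in which no two coeval edges cross. -/
def GoodEmbedding (n ω : ℕ) (G : SimpleGraph (Fin n)) (D : RawDrawing n) : Prop :=
  IsDrawing n G D ∧
  (∀ u v x y : Fin n, G.Adj u v → G.Adj x y → s(u, v) ≠ s(x, y) →
      CoevalEdges n ω u v x y →
      arcInterior (D.curve u v) ∩ arcInterior (D.curve x y) = ∅) ∧
  (∀ (r : Fin n) (c : G.Walk r r), c.IsCycle → ∀ v, ¬ CriticalFor n ω D c v)

/-- `G` (on `Fin n`) is a planar graph: it admits a planar drawing. -/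
def PlanarGraph (n : ℕ) (G : SimpleGraph (Fin n)) : Prop :=
  ∃ D : RawDrawing n, IsPlanarDrawing n G univ D

/-- `G` is triconnected: it has at least `4` vertices and removing any at most
two vertices leaves it connected. -/
def ThreeConnected (n : ℕ) (G : SimpleGraph (Fin n)) : Prop :=
  4 ≤ n ∧ ∀ s : Finset (Fin n), s.card ≤ 2 →
    (SimpleGraph.induce {v : Fin n | v ∉ s} G).Connected

/-- `G` is cubic: every vertex has degree three. -/
def Cubic (n : ℕ) (G : SimpleGraph (Fin n)) : Prop :=
  ∀ v : Fin n, (G.neighborSet v).ncard = 3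

/-! ### Straight-line drawings on a parabola -/

/-- The point of the parabola with abscissa `x`. -/
def parPt (x : ℝ) : Pt := (x, x ^ 2)

/-- The straight-line drawing with all vertices on a parabola. -/
def parDrawing (n : ℕ) (p : Fin n → ℝ) : RawDrawing n where
  pos v := parPt (p v)
  curve u v t := ((1 - t) * p u + t * p v, (1 - t) * p u ^ 2 + t * p v ^ 2)

theorem comb_ne_zero {X Y s : ℝ} (h0 : 0 < s) (h1 : s < 1) (hXY : 0 ≤ X * Y)
    (hne : X ≠ 0 ∨ Y ≠ 0) : (1 - s) * X + s * Y ≠ 0 := by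
  intro h
  have h1' : 0 < 1 - s := by linarith
  have e1 : (1 - s) * X ^ 2 + s * (X * Y) = 0 := by
    have : ((1 - s) * X + s * Y) * X = 0 := by rw [h]; ring
    linarith [this]
  have e2 : (1 - s) * (X * Y) + s * Y ^ 2 = 0 := by
    have : ((1 - s) * X + s * Y) * Y = 0 := by rw [h]; ring
    linarith [this]
  rcases hne with hne | hne
  · have : 0 < (1 - s) * X ^ 2 := by positivity
    have : 0 ≤ s * (X * Y) := by positivity
    linarith
  · have : 0 < s * Y ^ 2 := by positivity
    have : 0 ≤ (1 - s) * (X * Y) := by positivity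
    linarith

theorem par_curve_ge {n : ℕ} (p : Fin n → ℝ) (u v : Fin n) (t : ℝ) (ht : t ∈ Icc (0 : ℝ) 1) :
    ((parDrawing n p).curve u v t).1 ^ 2 ≤ ((parDrawing n p).curve u v t).2 := by
  have h : 0 ≤ t * (1 - t) * (p u - p v) ^ 2 := by
    have := ht.1
    have : 0 ≤ 1 - t := by linarith [ht.2]
    positivity
  simp only [parDrawing]
  nlinarith [h]

theorem par_curve_gt {n : ℕ} (p : Fin n → ℝ) (u v : Fin n) (huv : p u ≠ p v) (t : ℝ)
    (ht : t ∈ Ioo (0 : ℝ) 1) :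
    ((parDrawing n p).curve u v t).1 ^ 2 < ((parDrawing n p).curve u v t).2 := by
  have h : 0 < t * (1 - t) * (p u - p v) ^ 2 := by
    have := ht.1
    have : 0 < 1 - t := by linarith [ht.2]
    have : p u - p v ≠ 0 := sub_ne_zero.2 huv
    positivity
  simp only [parDrawing]
  nlinarith [h]

theorem isDrawing_par (n : ℕ) (G : SimpleGraph (Fin n)) (p : Fin n → ℝ)
    (hp : Function.Injective p) : IsDrawing n G (parDrawing n p) where
  pos_inj u v h := by
    simp only [parDrawing, parPt, Prod.mk.injEq] at h
    exact hp h.1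
  curve_symm u v := by
    funext t
    simp only [parDrawing, Prod.mk.injEq]
    constructor <;> ring
  arc u v h := by
    refine ⟨?_, ?_, ?_, ?_⟩
    · apply Continuous.continuousOn
      simp only [parDrawing]
      fun_prop
    · intro s _ t _ hst
      simp only [parDrawing, Prod.mk.injEq] at hst
      have h1 : (s - t) * (p v - p u) = 0 := by linarith [hst.1]
      rcases mul_eq_zero.1 h1 with h2 | h2
      · linarith
      · exact absurd (hp (sub_eq_zero.1 h2)) h.ne'
    · simp [parDrawing, parPt]
    · simp [parDrawing, parPt]
  vertex_off_arc u v h w := by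
    rintro ⟨t, ht, htw⟩
    have h1 := par_curve_gt p u v (fun e => h.ne (hp e)) t ht
    rw [htw] at h1
    simp [parDrawing, parPt] at h1

theorem not_inside_par {n : ℕ} {G : SimpleGraph (Fin n)} (p : Fin n → ℝ)
    (hp : Function.Injective p) {r : Fin n} (c : G.Walk r r) (v : Fin n) (hv : v ∉ c.support) :
    (parDrawing n p).pos v ∉ insideRegion (cycleImage n (parDrawing n p) c) := by
  rintro ⟨_, hb⟩
  set X := cycleImage n (parDrawing n p) c with hX
  let ray : Set Pt := (fun s : ℝ => ((p v, p v ^ 2 - s) : Pt)) '' Ici 0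
  have hray : IsPreconnected ray := by
    apply IsPreconnected.image
    · exact (convex_Ici 0).isPreconnected
    · fun_prop
  have hsub : ray ⊆ Xᶜ := by
    rintro _ ⟨s, hs, rfl⟩ ⟨u, w, huw, t, ht, he⟩
    have hs : 0 ≤ s := hs
    have hadj : G.Adj u w := c.adj_of_mem_edges huw
    have hne : p u ≠ p w := fun e => hadj.ne (hp e)
    have key : ∀ x ∈ c.support, p v ≠ p x := fun x hx e => hv (by rw [hp e]; exact hx)
    have hge := par_curve_ge p u w t ht
    rcases eq_or_lt_of_le ht.1 with h0 | h0
    · subst h0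
      simp only [parDrawing, Prod.mk.injEq] at he
      exact key u (c.fst_mem_support_of_mem_edges huw) (by linarith [he.1])
    rcases eq_or_lt_of_le ht.2 with h1 | h1
    · subst h1
      simp only [parDrawing, Prod.mk.injEq] at he
      exact key w (c.snd_mem_support_of_mem_edges huw) (by linarith [he.1])
    have := par_curve_gt p u w hne t ⟨h0, h1⟩
    rw [he] at this
    simp only at this
    linarith
  have hmem : (parDrawing n p).pos v ∈ ray := ⟨0, by simp, by simp [parDrawing, parPt]⟩
  have hcc := hray.subset_connectedComponentIn hmem hsub
  have hbr := hb.subset hcc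
  have hb2 : Bornology.IsBounded (Prod.snd '' ray) := LipschitzWith.prod_snd.isBounded_image hbr
  obtain ⟨B, hB⟩ := hb2.bddBelow
  have := hB ⟨(p v, p v ^ 2 - (|p v ^ 2 - B| + 1)), ⟨_, by simp; positivity, rfl⟩, rfl⟩
  simp only at this
  have := le_abs_self (p v ^ 2 - B)
  linarith

theorem good_of_pos (n ω : ℕ) (G : SimpleGraph (Fin n)) (p : Fin n → ℝ)
    (hp : Function.Injective p)
    (hsep : ∀ u v x y : Fin n, G.Adj u v → G.Adj x y → u ≠ x → u ≠ y → v ≠ x → v ≠ y →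
      CoevalEdges n ω u v x y →
      0 ≤ (p x - p u) * (p x - p v) * ((p y - p u) * (p y - p v))) :
    ∃ D : RawDrawing n, GoodEmbedding n ω G D := by
  refine ⟨parDrawing n p, isDrawing_par n G p hp, ?_, ?_⟩
  · intro u v x y huv hxy hne hco
    rw [Set.eq_empty_iff_forall_notMem]
    rintro q ⟨⟨t, ht, rfl⟩, ⟨s, hs, he⟩⟩
    simp only [parDrawing, Prod.mk.injEq] at he
    have hz : (1 - s) * ((p x - p u) * (p x - p v)) + s * ((p y - p u) * (p y - p v)) = 0 := by
      have e1 := he.1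
      have e2 := he.2
      linear_combination e2 - (p u + p v) * e1
    refine comb_ne_zero hs.1 hs.2 ?_ ?_ hz
    · by_cases h1 : u = x
      · subst h1; simp
      by_cases h2 : u = y
      · subst h2; simp
      by_cases h3 : v = x
      · subst h3; simp
      by_cases h4 : v = y
      · subst h4; simp
      exact hsep u v x y huv hxy h1 h2 h3 h4 hco
    · by_contra hcon
      push Not at hcon
      obtain ⟨hx, hy⟩ := hcon
      have aux : ∀ z, (p z - p u) * (p z - p v) = 0 → z = u ∨ z = v := by
        intro z hz
        rcases mul_eq_zero.1 hz with h | h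
        · exact Or.inl (hp (sub_eq_zero.1 h))
        · exact Or.inr (hp (sub_eq_zero.1 h))
      have hxyne := hxy.ne
      rcases aux x hx with rfl | rfl <;> rcases aux y hy with rfl | rfl <;>
        simp_all [Sym2.eq_swap]
  · intro r c _ v hcrit
    exact not_inside_par p hp c v hcrit.2.1 hcrit.2.2

/-! ### Topological non-planarity of `K_{3,3}` (via logarithms on squares) -/

theorem exists_log {A : Type} [TopologicalSpace A] [SimplyConnectedSpace A]
    [LocallyPathConnectedSpace A] (a₀ : A) (f : A → ℂ) (hf : Continuous f) (h0 : ∀ a, f a ≠ 0) :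
    ∃ g : A → ℂ, Continuous g ∧ ∀ a, Complex.exp (g a) = f a := by
  obtain ⟨F, ⟨_, hF⟩, _⟩ := Complex.isCoveringMapOn_exp.existsUnique_continuousMap_lifts
    (⟨f, hf⟩ : C(A, ℂ)) (a₀ := a₀) (e₀ := Complex.log (f a₀))
    (by simp [Complex.exp_log (h0 a₀)]) (by simpa using h0)
  exact ⟨F, F.continuous, fun a => congrFun hF a⟩

/-- Two continuous logarithms of the same function have the same variation. -/
theorem log_var_unique (g₁ g₂ : ℝ → ℂ) (h₁ : Continuous g₁) (h₂ : Continuous g₂)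
    (h : ∀ t, Complex.exp (g₁ t) = Complex.exp (g₂ t)) : g₁ 1 - g₁ 0 = g₂ 1 - g₂ 0 := by
  have hu := Complex.isCoveringMapOn_exp.existsUnique_continuousMap_lifts
    (⟨fun t => Complex.exp (g₁ t), by fun_prop⟩ : C(ℝ, ℂ)) (a₀ := (0 : ℝ)) (e₀ := g₁ 0)
    (by simp) (by simp)
  have e := hu.unique (y₁ := ⟨g₁, h₁⟩) (y₂ := ⟨fun t => g₂ t + (g₁ 0 - g₂ 0), by fun_prop⟩)
    ⟨rfl, rfl⟩ ⟨by simp, by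
      funext t
      simp [Complex.exp_add, Complex.exp_sub, h 0, h t]⟩
  have := congrArg (fun F : C(ℝ, ℂ) => F 1) e
  simp only [ContinuousMap.coe_mk] at this
  rw [this]; ring

/-- The variation of the logarithm of a nonvanishing continuous function on `[0,1]`. -/
theorem exists_var (f : ℝ → ℂ) (hf : Continuous f) (h0 : ∀ a, f a ≠ 0) :
    ∃ V : ℂ, Complex.exp V = f 1 / f 0 ∧
      ∀ g : ℝ → ℂ, Continuous g → ((∀ t, Complex.exp (g t) = f t) ∨
        (∀ t, Complex.exp (g t) = - f t)) → g 1 - g 0 = V := by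
  obtain ⟨g₀, hc, hg⟩ := exists_log (0 : ℝ) f hf h0
  refine ⟨g₀ 1 - g₀ 0, by rw [Complex.exp_sub, hg, hg], ?_⟩
  rintro g hgc (h | h)
  · exact log_var_unique g g₀ hgc hc (fun t => by rw [h, hg])
  · have := log_var_unique (fun t => g t + Real.pi * Complex.I) g₀ (by fun_prop) hc
      (fun t => by rw [Complex.exp_add, h, hg, Complex.exp_pi_mul_I]; ring)
    rw [← this]; ring

theorem square_identity (γ δ : ℝ → ℂ) (hγ : Continuous γ) (hδ : Continuous δ)
    (hne : ∀ s t, γ s ≠ δ t) (V₁ V₂ V₃ V₄ : ℂ)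
    (h₁ : ∀ g : ℝ → ℂ, Continuous g → ((∀ t, Complex.exp (g t) = γ t - δ 0) ∨
        (∀ t, Complex.exp (g t) = - (γ t - δ 0))) → g 1 - g 0 = V₁)
    (h₂ : ∀ g : ℝ → ℂ, Continuous g → ((∀ t, Complex.exp (g t) = δ t - γ 1) ∨
        (∀ t, Complex.exp (g t) = - (δ t - γ 1))) → g 1 - g 0 = V₂)
    (h₃ : ∀ g : ℝ → ℂ, Continuous g → ((∀ t, Complex.exp (g t) = γ t - δ 1) ∨
        (∀ t, Complex.exp (g t) = - (γ t - δ 1))) → g 1 - g 0 = V₃)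
    (h₄ : ∀ g : ℝ → ℂ, Continuous g → ((∀ t, Complex.exp (g t) = δ t - γ 0) ∨
        (∀ t, Complex.exp (g t) = - (δ t - γ 0))) → g 1 - g 0 = V₄) :
    V₁ + V₂ = V₃ + V₄ := by
  obtain ⟨L, hL, hLe⟩ := exists_log ((0, 0) : ℝ × ℝ) (fun q => γ q.1 - δ q.2) (by fun_prop)
    (fun q => sub_ne_zero.2 (hne _ _))
  rw [← h₁ (fun t => L (t, 0)) (by fun_prop) (Or.inl fun t => hLe _),
    ← h₂ (fun t => L (1, t)) (by fun_prop) (Or.inr fun t => by rw [hLe]; ring),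
    ← h₃ (fun t => L (t, 1)) (by fun_prop) (Or.inl fun t => hLe _),
    ← h₄ (fun t => L (0, t)) (by fun_prop) (Or.inr fun t => by rw [hLe]; ring)]
  ring

theorem exists_int_of_exp (V a b : ℂ) (h : Complex.exp V = Complex.exp a / Complex.exp b) :
    ∃ k : ℤ, V = a - b + k * (2 * Real.pi * Complex.I) := by
  rw [← Complex.exp_sub, Complex.exp_eq_exp_iff_exists_int] at h
  exact h

/-- Antisymmetric choice of logarithms of differences. -/
theorem exists_anti_log (P : Fin 3 → ℂ) (hP : Function.Injective P) :
    ∃ l : Fin 3 → Fin 3 → ℂ, (∀ i j, i ≠ j → Complex.exp (l i j) = P i - P j) ∧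
      ∀ i j, i < j → l j i = l i j + Real.pi * Complex.I := by
  refine ⟨fun i j => if i < j then Complex.log (P i - P j)
    else Complex.log (P j - P i) + Real.pi * Complex.I, ?_, ?_⟩
  · intro i j hij
    have h1 : P i - P j ≠ 0 := sub_ne_zero.2 (fun e => hij (hP e))
    have h2 : P j - P i ≠ 0 := sub_ne_zero.2 (fun e => hij (hP e).symm)
    dsimp only
    split_ifs
    · exact Complex.exp_log h1
    · rw [Complex.exp_add, Complex.exp_log h2, Complex.exp_pi_mul_I]; ring
  · intro i j hij
    simp [hij, hij.not_gt]

theorem parity_contra (k k' : Fin 3 → Fin 3 → Fin 3 → ℤ)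
    (h1 : ∀ i i' j j', i < i' → j < j' →
      1 + k i j i' + k' i' j' j - k' i j j' - k i' j' i = 0)
    (h2 : ∀ i i' j j', i < i' → j' < j →
      k i j i' + k' i' j' j - k' i j j' - k i' j' i = 0) : False := by
  have a1 := h1 0 1 0 1 (by decide) (by decide)
  have a2 := h1 0 1 0 2 (by decide) (by decide)
  have a3 := h1 0 1 1 2 (by decide) (by decide)
  have a4 := h1 0 2 0 1 (by decide) (by decide)
  have a5 := h1 0 2 0 2 (by decide) (by decide)
  have a6 := h1 0 2 1 2 (by decide) (by decide)
  have a7 := h1 1 2 0 1 (by decide) (by decide)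
  have a8 := h1 1 2 0 2 (by decide) (by decide)
  have a9 := h1 1 2 1 2 (by decide) (by decide)
  have b1 := h2 0 1 1 0 (by decide) (by decide)
  have b2 := h2 0 1 2 0 (by decide) (by decide)
  have b3 := h2 0 1 2 1 (by decide) (by decide)
  have b4 := h2 0 2 1 0 (by decide) (by decide)
  have b5 := h2 0 2 2 0 (by decide) (by decide)
  have b6 := h2 0 2 2 1 (by decide) (by decide)
  have b7 := h2 1 2 1 0 (by decide) (by decide)
  have b8 := h2 1 2 2 0 (by decide) (by decide)
  have b9 := h2 1 2 2 1 (by decide) (by decide)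
  omega

theorem no_K33_map (P Q : Fin 3 → ℂ) (γ : Fin 3 → Fin 3 → ℝ → ℂ)
    (hc : ∀ i j, Continuous (γ i j)) (h0 : ∀ i j, γ i j 0 = P i) (h1 : ∀ i j, γ i j 1 = Q j)
    (hne : ∀ i i' j j', i ≠ i' → j ≠ j' → ∀ s t, γ i j s ≠ γ i' j' t) : False := by
  have other : ∀ i : Fin 3, ∃ i', i' ≠ i := by decide
  have other2 : ∀ i j : Fin 3, ∃ i', i' ≠ i ∧ i' ≠ j := by decide
  have hP : Function.Injective P := by
    intro i i' h
    by_contra hii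
    exact hne i i' 0 1 hii (by decide) 0 0 (by rw [h0, h0, h])
  have hQ : Function.Injective Q := by
    intro j j' h
    by_contra hjj
    exact hne 0 1 j j' (by decide) hjj 1 1 (by rw [h1, h1, h])
  have hPQ : ∀ i j, P i - Q j ≠ 0 := by
    intro i j h
    obtain ⟨i', hi'⟩ := other i
    obtain ⟨j', hj'⟩ := other j
    exact hne i i' j' j hi'.symm hj' 0 1 (by rw [h0, h1]; exact sub_eq_zero.1 h)
  have hγP : ∀ i j i', i' ≠ i → ∀ t, γ i j t - P i' ≠ 0 := by
    intro i j i' hi t h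
    obtain ⟨j', hj'⟩ := other j
    exact hne i i' j j' hi.symm hj'.symm t 0 (by rw [h0]; exact sub_eq_zero.1 h)
  have hγQ : ∀ i j j', j' ≠ j → ∀ t, γ i j t - Q j' ≠ 0 := by
    intro i j j' hj t h
    obtain ⟨i', hi'⟩ := other i
    exact hne i i' j j' hi'.symm hj.symm t 1 (by rw [h1]; exact sub_eq_zero.1 h)
  obtain ⟨l, hl, hla⟩ := exists_anti_log P hP
  obtain ⟨m, hm, hma⟩ := exists_anti_log Q hQ
  let μ : Fin 3 → Fin 3 → ℂ := fun i j => Complex.log (P i - Q j)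
  have hμ : ∀ i j, Complex.exp (μ i j) = P i - Q j := fun i j => Complex.exp_log (hPQ i j)
  have hμ' : ∀ i j, Complex.exp (μ i j + Real.pi * Complex.I) = Q j - P i := fun i j => by
    rw [Complex.exp_add, hμ, Complex.exp_pi_mul_I]; ring
  have exV : ∀ i j i', ∃ V : ℂ, i' ≠ i → (Complex.exp V = (γ i j 1 - P i') / (γ i j 0 - P i') ∧
      ∀ g : ℝ → ℂ, Continuous g → ((∀ t, Complex.exp (g t) = γ i j t - P i') ∨
        (∀ t, Complex.exp (g t) = - (γ i j t - P i'))) → g 1 - g 0 = V) := by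
    intro i j i'
    by_cases h : i' = i
    · exact ⟨0, fun h' => absurd h h'⟩
    · obtain ⟨V, hV⟩ := exists_var (fun t => γ i j t - P i') ((hc i j).sub continuous_const)
        (hγP i j i' h)
      exact ⟨V, fun _ => hV⟩
  have exW : ∀ i j j', ∃ V : ℂ, j' ≠ j → (Complex.exp V = (γ i j 1 - Q j') / (γ i j 0 - Q j') ∧
      ∀ g : ℝ → ℂ, Continuous g → ((∀ t, Complex.exp (g t) = γ i j t - Q j') ∨
        (∀ t, Complex.exp (g t) = - (γ i j t - Q j'))) → g 1 - g 0 = V) := by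
    intro i j j'
    by_cases h : j' = j
    · exact ⟨0, fun h' => absurd h h'⟩
    · obtain ⟨V, hV⟩ := exists_var (fun t => γ i j t - Q j') ((hc i j).sub continuous_const)
        (hγQ i j j' h)
      exact ⟨V, fun _ => hV⟩
  choose V hV using exV
  choose W hW using exW
  have exk : ∀ i j i', ∃ k : ℤ, i' ≠ i →
      V i j i' = (μ i' j + Real.pi * Complex.I) - l i i' + k * (2 * Real.pi * Complex.I) := by
    intro i j i'
    by_cases h : i' = i
    · exact ⟨0, fun h' => absurd h h'⟩
    · obtain ⟨k, hk⟩ := exists_int_of_exp (V i j i') (μ i' j + Real.pi * Complex.I) (l i i')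
        (by rw [(hV i j i' h).1, hμ', hl i i' (Ne.symm h), h0, h1])
      exact ⟨k, fun _ => hk⟩
  have exk' : ∀ i j j', ∃ k : ℤ, j' ≠ j →
      W i j j' = m j j' - μ i j' + k * (2 * Real.pi * Complex.I) := by
    intro i j j'
    by_cases h : j' = j
    · exact ⟨0, fun h' => absurd h h'⟩
    · obtain ⟨k, hk⟩ := exists_int_of_exp (W i j j') (m j j') (μ i j')
        (by rw [(hW i j j' h).1, hμ, hm j j' (Ne.symm h), h0, h1])
      exact ⟨k, fun _ => hk⟩
  choose k hk using exk
  choose k' hk' using exk'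
  have hsq : ∀ i i' j j', i ≠ i' → j ≠ j' → V i j i' + W i' j' j = W i j j' + V i' j' i := by
    intro i i' j j' hi hj
    refine square_identity (γ i j) (γ i' j') (hc i j) (hc i' j') (hne i i' j j' hi hj) _ _ _ _
      ?_ ?_ ?_ ?_
    · rw [h0]; exact (hV i j i' hi.symm).2
    · rw [h1]; exact (hW i' j' j hj).2
    · rw [h1]; exact (hW i j j' hj.symm).2
    · rw [h0]; exact (hV i' j' i hi).2
  have hpi : (2 * Real.pi * Complex.I : ℂ) ≠ 0 := Complex.two_pi_I_ne_zero
  refine parity_contra k k' ?_ ?_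
  · intro i i' j j' hi hj
    have e := hsq i i' j j' hi.ne hj.ne
    rw [hk _ _ _ hi.ne', hk _ _ _ hi.ne, hk' _ _ _ hj.ne, hk' _ _ _ hj.ne', hla i i' hi,
      hma j j' hj] at e
    have : ((1 + k i j i' + k' i' j' j - k' i j j' - k i' j' i : ℤ) : ℂ) *
        (2 * Real.pi * Complex.I) = 0 := by
      push_cast
      linear_combination e
    exact_mod_cast (mul_eq_zero.1 this).resolve_right hpi
  · intro i i' j j' hi hj
    have e := hsq i i' j j' hi.ne hj.ne'
    rw [hk _ _ _ hi.ne', hk _ _ _ hi.ne, hk' _ _ _ hj.ne, hk' _ _ _ hj.ne', hla i i' hi,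
      hma j' j hj] at e
    have : ((k i j i' + k' i' j' j - k' i j j' - k i' j' i : ℤ) : ℂ) *
        (2 * Real.pi * Complex.I) = 0 := by
      push_cast
      linear_combination e
    exact_mod_cast (mul_eq_zero.1 this).resolve_right hpi

/-! ### Consequences of planarity and triconnectivity -/

theorem drawingImage_disjoint {n : ℕ} {G : SimpleGraph (Fin n)} {D : RawDrawing n}
    (hD : IsPlanarDrawing n G univ D) (S T : Set (Fin n)) (hST : Disjoint S T) (p : Pt)
    (hS : p ∈ drawingImage n G S D) (hT : p ∈ drawingImage n G T D) : False := by
  have cls : ∀ U : Set (Fin n), p ∈ drawingImage n G U D →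
      (∃ v ∈ U, p = D.pos v) ∨ ∃ u ∈ U, ∃ v ∈ U, G.Adj u v ∧ p ∈ arcInterior (D.curve u v) := by
    intro U hU
    rcases hU with ⟨v, hv, rfl⟩ | hU
    · exact Or.inl ⟨v, hv, rfl⟩
    · simp only [mem_iUnion] at hU
      obtain ⟨u, v, hu, hv, huv, t, ht, rfl⟩ := hU
      have harc := hD.arc u (mem_univ _) v (mem_univ _) huv
      rcases eq_or_lt_of_le ht.1 with h0 | h0
      · left; exact ⟨u, hu, by rw [← h0]; exact harc.2.2.1⟩
      rcases eq_or_lt_of_le ht.2 with h1 | h1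
      · left; exact ⟨v, hv, by rw [h1]; exact harc.2.2.2⟩
      right; exact ⟨u, hu, v, hv, huv, t, ⟨h0, h1⟩, rfl⟩
  have hdis := Set.disjoint_left.1 hST
  rcases cls S hS with ⟨v, hv, rfl⟩ | ⟨u, hu, v, hv, huv, hp⟩
  · rcases cls T hT with ⟨w, hw, he⟩ | ⟨x, hx, y, hy, hxy, hq⟩
    · have := hD.pos_inj (mem_univ _) (mem_univ _) he
      exact hdis hv (this ▸ hw)
    · exact hD.vertex_off_arc x (mem_univ _) y (mem_univ _) hxy v (mem_univ _) hq
  · rcases cls T hT with ⟨w, hw, rfl⟩ | ⟨x, hx, y, hy, hxy, hq⟩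
    · exact hD.vertex_off_arc u (mem_univ _) v (mem_univ _) huv w (mem_univ _) hp
    · have hne : s(u, v) ≠ s(x, y) := by
        intro h
        rcases Sym2.eq_iff.1 h with ⟨h1, _⟩ | ⟨h1, _⟩
        · exact hdis hu (h1 ▸ hx)
        · exact hdis hu (h1 ▸ hy)
      have := hD.no_cross u (mem_univ _) v (mem_univ _) x (mem_univ _) y (mem_univ _) huv hxy hne
      have hm : p ∈ arcInterior (D.curve u v) ∩ arcInterior (D.curve x y) := ⟨hp, hq⟩
      rw [this] at hm
      exact hm

theorem joined_edge {n : ℕ} {G : SimpleGraph (Fin n)} {D : RawDrawing n}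
    (hD : IsPlanarDrawing n G univ D) (S : Set (Fin n)) (u v : Fin n) (hu : u ∈ S) (hv : v ∈ S)
    (huv : G.Adj u v) : JoinedIn (drawingImage n G S D) (D.pos u) (D.pos v) := by
  have harc := hD.arc u (mem_univ _) v (mem_univ _) huv
  refine JoinedIn.ofLine (f := D.curve u v) harc.1 harc.2.2.1 harc.2.2.2 ?_
  intro p hp
  right
  simp only [mem_iUnion]
  exact ⟨u, v, hu, hv, huv, hp⟩

theorem joined_reach {n : ℕ} {G : SimpleGraph (Fin n)} {D : RawDrawing n}
    (hD : IsPlanarDrawing n G univ D) (S : Set (Fin n)) (u v : Fin n) (hu : u ∈ S)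
    (h : Relation.ReflTransGen (fun a b => G.Adj a b ∧ a ∈ S ∧ b ∈ S) u v) :
    JoinedIn (drawingImage n G S D) (D.pos u) (D.pos v) := by
  induction h with
  | refl => exact JoinedIn.refl (Or.inl ⟨u, hu, rfl⟩)
  | tail _ hbc ih => exact ih.trans (joined_edge hD S _ _ hbc.2.1 hbc.2.2 hbc.1)

/-- Abstract non-planarity: vertices `P i`, `Q j` joined inside the images of vertex sets `S i j`
which are disjoint for independent pairs. -/
theorem no_K33_drawing {n : ℕ} {G : SimpleGraph (Fin n)} {D : RawDrawing n}
    (hD : IsPlanarDrawing n G univ D) (P Q : Fin 3 → Fin n) (S : Fin 3 → Fin 3 → Set (Fin n))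
    (hj : ∀ i j, JoinedIn (drawingImage n G (S i j) D) (D.pos (P i)) (D.pos (Q j)))
    (hdis : ∀ i i' j j', i ≠ i' → j ≠ j' → Disjoint (S i j) (S i' j')) : False := by
  let e : ℝ × ℝ → ℂ := fun q => ⟨q.1, q.2⟩
  have he : Continuous e := by
    have : e = Complex.equivRealProdCLM.symm := by
      funext q; apply Complex.ext <;> simp [e]
    rw [this]
    exact Complex.equivRealProdCLM.symm.continuous
  have hinj : Function.Injective e := by
    intro q q' h
    have h1 := congrArg Complex.re h
    have h2 := congrArg Complex.im h
    exact Prod.ext h1 h2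
  refine no_K33_map (fun i => e (D.pos (P i))) (fun j => e (D.pos (Q j)))
    (fun i j t => e ((hj i j).somePath.extend t)) ?_ ?_ ?_ ?_
  · intro i j
    exact he.comp (hj i j).somePath.continuous_extend
  · intro i j; simp
  · intro i j; simp
  · intro i i' j j' hi hjj s t h
    have h := hinj h
    have hm : ∀ i j t, (hj i j).somePath.extend t ∈ drawingImage n G (S i j) D := by
      intro i j t
      exact (hj i j).somePath_mem _
    refine drawingImage_disjoint hD _ _ (hdis i i' j j' hi hjj) _ (hm i j s) ?_
    rw [h]
    exact hm i' j' t

/-- Closed sets in a triconnected graph minus at most two vertices. -/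
theorem closed_all {n : ℕ} {G : SimpleGraph (Fin n)} (h3 : ThreeConnected n G)
    (s : Finset (Fin n)) (hs : s.card ≤ 2) (T : Set (Fin n)) (w : Fin n) (hw : w ∈ T)
    (hws : w ∉ s) (hcl : ∀ u ∈ T, u ∉ s → ∀ v, G.Adj u v → v ∉ s → v ∈ T) :
    ∀ v, v ∉ s → v ∈ T := by
  intro v hv
  have hc := h3.2 s hs
  obtain ⟨p⟩ := hc.preconnected ⟨w, hws⟩ ⟨v, hv⟩
  have key : ∀ (a b : {v : Fin n | v ∉ s}) (_ : (SimpleGraph.induce {v : Fin n | v ∉ s} G).Walk a b),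
      a.1 ∈ T → b.1 ∈ T := by
    intro a b q
    induction q with
    | nil => exact id
    | @cons a b c hab _ ih => exact fun ha => ih (hcl a.1 ha a.2 b.1 hab b.2)
  exact key _ _ p hw

theorem cubic_nbrs {n : ℕ} {G : SimpleGraph (Fin n)} (hc : Cubic n G) {u a b c : Fin n}
    (ha : G.Adj u a) (hb : G.Adj u b) (hcc : G.Adj u c) (hab : a ≠ b) (hac : a ≠ c)
    (hbc : b ≠ c) {v : Fin n} (hv : G.Adj u v) : v = a ∨ v = b ∨ v = c := by
  have h3 := hc u
  have hsub : ({a, b, c} : Set (Fin n)) ⊆ G.neighborSet u := by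
    rintro x (rfl | rfl | rfl) <;> assumption
  have hcard : ({a, b, c} : Set (Fin n)).ncard = 3 := Set.ncard_eq_three.2 ⟨a, b, c, hab, hac, hbc, rfl⟩
  have := Set.eq_of_subset_of_ncard_le hsub (by rw [h3, hcard]) (Set.toFinite _)
  have hv' : v ∈ G.neighborSet u := hv
  rw [← this] at hv'
  simpa using hv'

theorem exists_off {n : ℕ} (hn : 6 ≤ n) (s : Finset (Fin n)) (hs : s.card ≤ 5) :
    ∃ w, w ∉ s := by
  by_contra h
  push Not at h
  have : s = Finset.univ := Finset.eq_univ_iff_forall.2 h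
  rw [this, Finset.card_univ, Fintype.card_fin] at hs
  omega

/-- No `K_{2,3}`. -/
theorem no_K23 {n : ℕ} {G : SimpleGraph (Fin n)} (hn : 6 ≤ n) (hpl : PlanarGraph n G)
    (h3 : ThreeConnected n G) (hc : Cubic n G) (a b x y z : Fin n) (hab : a ≠ b)
    (hxy : x ≠ y) (hxz : x ≠ z) (hyz : y ≠ z)
    (hax : G.Adj a x) (hay : G.Adj a y) (haz : G.Adj a z)
    (hbx : G.Adj b x) (hby : G.Adj b y) (hbz : G.Adj b z) : False := by
  obtain ⟨D, hD⟩ := hpl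
  obtain ⟨w, hw⟩ := exists_off hn {a, b, x, y, z} Finset.card_le_five
  let R : Set (Fin n) := {v | v ∉ ({a, b, x, y, z} : Finset (Fin n))}
  have hwR : w ∈ R := hw
  let rel : Fin n → Fin n → Prop := fun u v => G.Adj u v ∧ u ∈ R ∧ v ∈ R
  let C : Set (Fin n) := {v | Relation.ReflTransGen rel w v}
  have hCR : ∀ v ∈ C, v ∈ R := by
    intro v hv
    induction hv with
    | refl => exact hwR
    | tail _ h _ => exact h.2.2
  let T : Set (Fin n) := {v | v ∈ C ∨ ((v = x ∨ v = y ∨ v = z) ∧ ∃ c ∈ C, G.Adj v c)}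
  have hT := closed_all h3 {a, b} Finset.card_le_two T w (Or.inl Relation.ReflTransGen.refl)
    (by intro h; apply hw; simp at h ⊢; tauto) (by
      intro u hu hus v huv hvs
      rcases hu with hu | ⟨hu, c, hcC, huc⟩
      · by_cases hvR : v ∈ R
        · exact Or.inl (Relation.ReflTransGen.tail hu ⟨huv, hCR u hu, hvR⟩)
        · right
          refine ⟨?_, u, hu, huv.symm⟩
          simp only [R, mem_ofPred_eq, Finset.mem_insert, Finset.mem_singleton] at hvR hvs
          tauto
      · have hca : a ≠ c := by rintro rfl; have := hCR _ hcC; simp [R] at this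
        have hcb : b ≠ c := by rintro rfl; have := hCR _ hcC; simp [R] at this
        have hua : G.Adj u a ∧ G.Adj u b := by
          rcases hu with rfl | rfl | rfl
          · exact ⟨hax.symm, hbx.symm⟩
          · exact ⟨hay.symm, hby.symm⟩
          · exact ⟨haz.symm, hbz.symm⟩
        rcases cubic_nbrs hc hua.1 hua.2 huc hab hca hcb huv with h | h | h
        · simp [h] at hvs
        · simp [h] at hvs
        · exact Or.inl (h ▸ hcC))
  have hreach : ∀ v, (v = x ∨ v = y ∨ v = z) →
      Relation.ReflTransGen (fun p q => G.Adj p q ∧ p ∈ insert v R ∧ q ∈ insert v R) w v := by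
    intro v hv
    have hvab : v ∉ ({a, b} : Finset (Fin n)) := by
      rcases hv with rfl | rfl | rfl <;>
        simp [hax.ne', hay.ne', haz.ne', hbx.ne', hby.ne', hbz.ne']
    rcases hT v hvab with h | ⟨_, c, hcC, hvc⟩
    · exfalso
      have := hCR v h
      simp only [R, mem_ofPred_eq, Finset.mem_insert, Finset.mem_singleton] at this
      tauto
    · refine Relation.ReflTransGen.tail (b := c) ?_ ⟨hvc.symm, Or.inr (hCR c hcC), Or.inl rfl⟩
      exact Relation.ReflTransGen.mono (r := rel) (fun p q h => ⟨h.1, Or.inr h.2.1, Or.inr h.2.2⟩) _ _ hcC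
  have hRx : ∀ v ∈ R, v ≠ a ∧ v ≠ b ∧ v ≠ x ∧ v ≠ y ∧ v ≠ z := by
    intro v hv
    simp only [R, mem_ofPred_eq, Finset.mem_insert, Finset.mem_singleton] at hv
    tauto
  let Q : Fin 3 → Fin n := ![x, y, z]
  have hQ : ∀ j, Q j = x ∨ Q j = y ∨ Q j = z := by
    intro j; fin_cases j <;> simp [Q]
  have hQinj : ∀ j j', j ≠ j' → Q j ≠ Q j' := by
    intro j j' h
    fin_cases j <;> fin_cases j' <;> simp_all [Q, Ne.symm]
  have haQ : ∀ j, G.Adj a (Q j) := by intro j; fin_cases j <;> simpa [Q]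
  have hbQ : ∀ j, G.Adj b (Q j) := by intro j; fin_cases j <;> simpa [Q]
  have hRQ : ∀ j, Q j ∉ R := by
    intro j h
    have := hRx _ h
    rcases hQ j with h | h | h <;> tauto
  have haR : a ∉ R := fun h => (hRx _ h).1 rfl
  have hbR : b ∉ R := fun h => (hRx _ h).2.1 rfl
  let X : Fin 3 → Set (Fin n) := ![{a}, {b}, R]
  refine no_K33_drawing hD ![a, b, w] Q (fun i j => insert (Q j) (X i)) ?_ ?_
  · intro i j
    fin_cases i
    · exact joined_edge hD _ _ _ (by simp [X]) (by simp) (haQ j)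
    · exact joined_edge hD _ _ _ (by simp [X]) (by simp) (hbQ j)
    · exact joined_reach hD _ _ _ (Or.inr hwR) (hreach _ (hQ j))
  · intro i i' j j' hi hj
    have hXX : Disjoint (X i) (X i') := by
      rw [Set.disjoint_left]
      intro v h1 h2
      fin_cases i <;> fin_cases i' <;> simp [X] at hi h1 h2 <;>
        first
        | exact hab (h1.symm.trans h2)
        | exact hab (h2.symm.trans h1)
        | (subst h1; exact haR h2)
        | (subst h1; exact hbR h2)
        | (subst h2; exact haR h1)
        | (subst h2; exact hbR h1)
    have hQX : ∀ i j, Q j ∉ X i := by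
      intro i j h
      fin_cases i
      · exact (haQ j).ne' h
      · exact (hbQ j).ne' h
      · exact hRQ j h
    rw [Set.disjoint_left]
    rintro v (rfl | h1) (h2 | h2)
    · exact hQinj j j' hj h2
    · exact hQX _ _ h2
    · subst h2; exact hQX _ _ h1
    · exact Set.disjoint_left.1 hXX h1 h2

/-- No `K_4` minus an edge. -/
theorem no_diamond {n : ℕ} {G : SimpleGraph (Fin n)} (hn : 6 ≤ n)
    (h3 : ThreeConnected n G) (hc : Cubic n G) (a b c d : Fin n)
    (hac : G.Adj a c) (had : G.Adj a d) (hbc : G.Adj b c) (hbd : G.Adj b d)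
    (hcd : G.Adj c d) (hab : a ≠ b) : False := by
  obtain ⟨w, hw⟩ := exists_off hn {a, b, c, d}
    (Finset.card_le_four.trans (by norm_num))
  simp only [Finset.mem_insert, Finset.mem_singleton, not_or] at hw
  have := closed_all h3 {a, b} Finset.card_le_two {c, d} c (by simp)
    (by simp [hac.ne', hbc.ne']) (by
      intro u hu _ v huv hvs
      simp only [Finset.mem_insert, Finset.mem_singleton, not_or] at hvs
      rcases hu with rfl | rfl
      · rcases cubic_nbrs hc hac.symm hbc.symm hcd hab had.ne hbd.ne huv with h | h | h
        · exact absurd h hvs.1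
        · exact absurd h hvs.2
        · exact Or.inr h
      · rcases cubic_nbrs hc had.symm hbd.symm hcd.symm hab hac.ne hbc.ne huv with h | h | h
        · exact absurd h hvs.1
        · exact absurd h hvs.2
        · exact Or.inl h) w (by simp; tauto)
  simp at this
  tauto

/-! ### Cyclic orders on the line -/

/-- Negative iff the pairs `a, b` and `c, d` interleave. -/
def sepv (a b c d : ℝ) : ℝ := (c - a) * (c - b) * ((d - a) * (d - b))

theorem sepv_excl {A B C D : ℝ} (h : sepv A C B D < 0) :
    0 ≤ sepv A B C D ∧ 0 ≤ sepv A D B C := by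
  unfold sepv at *
  constructor <;> nlinarith [sq_nonneg ((A - D) * (B - C)), sq_nonneg ((A - B) * (C - D))]

theorem betw_iff {p q r : ℝ} : (r - p) * (r - q) < 0 ↔ (p < r ∧ r < q) ∨ (q < r ∧ r < p) := by
  rw [mul_neg_iff]
  constructor
  · rintro (⟨h1, h2⟩ | ⟨h1, h2⟩)
    · left; constructor <;> linarith
    · right; constructor <;> linarith
  · rintro (⟨h1, h2⟩ | ⟨h1, h2⟩)
    · left; constructor <;> linarith
    · right; constructor <;> linarith

theorem outs_iff {p q r : ℝ} : 0 < (r - p) * (r - q) ↔ (p < r ∧ q < r) ∨ (r < p ∧ r < q) := by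
  rw [mul_pos_iff]
  constructor
  · rintro (⟨h1, h2⟩ | ⟨h1, h2⟩)
    · left; constructor <;> linarith
    · right; constructor <;> linarith
  · rintro (⟨h1, h2⟩ | ⟨h1, h2⟩)
    · left; constructor <;> linarith
    · right; constructor <;> linarith

theorem sepv_iff {p q r s : ℝ} : sepv p q r s < 0 ↔
    (((p < r ∧ q < r) ∨ (r < p ∧ r < q)) ∧ ((p < s ∧ s < q) ∨ (q < s ∧ s < p))) ∨
    (((p < r ∧ r < q) ∨ (q < r ∧ r < p)) ∧ ((p < s ∧ q < s) ∨ (s < p ∧ s < q))) := by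
  unfold sepv
  rw [mul_neg_iff, betw_iff, betw_iff, outs_iff, outs_iff]

theorem sepv_insert {a b c d : ℝ} (h : sepv a c b d < 0) (U : Finset ℝ) :
    ∃ x, x ∉ U ∧ sepv x c a b < 0 ∧ sepv x d a b < 0 ∧ sepv a c x d < 0 ∧ sepv x c b d < 0 := by
  rw [sepv_iff] at h
  by_cases h1 : a < b ∧ ((b < c ∧ b < d) ∨ (c < a ∧ d < a) ∨ (b < c ∧ d < a) ∨ (b < d ∧ c < a))
  · obtain ⟨x, hx, hxU⟩ := (Ioo_infinite h1.1).exists_notMem_finset U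
    refine ⟨x, hxU, ?_⟩
    obtain ⟨hx1, hx2⟩ := hx
    simp only [sepv_iff]
    grind
  by_cases h2 : b < a ∧ ((a < c ∧ a < d) ∨ (c < b ∧ d < b) ∨ (a < c ∧ d < b) ∨ (a < d ∧ c < b))
  · obtain ⟨x, hx, hxU⟩ := (Ioo_infinite h2.1).exists_notMem_finset U
    refine ⟨x, hxU, ?_⟩
    obtain ⟨hx1, hx2⟩ := hx
    simp only [sepv_iff]
    grind
  · obtain ⟨x, hx, hxU⟩ := (Ioi_infinite (max (max a b) (max c d))).exists_notMem_finset U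
    refine ⟨x, hxU, ?_⟩
    simp only [mem_Ioi, max_lt_iff] at hx
    obtain ⟨⟨hxa, hxb⟩, hxc, hxd⟩ := hx
    simp only [sepv_iff]
    grind

/-- Four vertices in convex position whose two diagonals are not both edges. -/
theorem quad_ok (adj : ℕ → ℕ → Prop) (hsym : ∀ u v, adj u v → adj v u) (p : ℕ → ℝ)
    (A B C D : ℕ) (hs : sepv (p A) (p C) (p B) (p D) < 0) (hno : ¬ (adj A C ∧ adj B D))
    (u v w z : ℕ) (hu : u = A ∨ u = B ∨ u = C ∨ u = D) (hv : v = A ∨ v = B ∨ v = C ∨ v = D)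
    (hw : w = A ∨ w = B ∨ w = C ∨ w = D) (hz : z = A ∨ z = B ∨ z = C ∨ z = D)
    (huv : u ≠ v) (huw : u ≠ w) (huz : u ≠ z) (hvw : v ≠ w) (hvz : v ≠ z) (hwz : w ≠ z)
    (h1 : adj u v) (h2 : adj w z) : 0 ≤ sepv (p u) (p v) (p w) (p z) := by
  obtain ⟨e1, e2⟩ := sepv_excl hs
  by_cases hAC : (u = A ∧ v = C) ∨ (u = C ∧ v = A)
  · exfalso
    apply hno
    rcases hAC with ⟨rfl, rfl⟩ | ⟨rfl, rfl⟩ <;> grind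
  by_cases hBD : (u = B ∧ v = D) ∨ (u = D ∧ v = B)
  · exfalso
    apply hno
    rcases hBD with ⟨rfl, rfl⟩ | ⟨rfl, rfl⟩ <;> grind
  have key : (sepv (p u) (p v) (p w) (p z) = sepv (p A) (p B) (p C) (p D)) ∨
      (sepv (p u) (p v) (p w) (p z) = sepv (p A) (p D) (p B) (p C)) := by
    clear hno h1 h2 hs e1 e2
    unfold sepv
    rcases hu with rfl | rfl | rfl | rfl <;> rcases hv with rfl | rfl | rfl | rfl <;>
    first
    | exact absurd rfl huv
    | (exfalso; simp at hAC; done)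
    | (exfalso; simp at hBD; done)
    | (rcases hw with rfl | rfl | rfl | rfl <;>
        first
        | exact absurd rfl huw
        | exact absurd rfl hvw
        | (rcases hz with rfl | rfl | rfl | rfl <;>
            first
            | exact absurd rfl huz
            | exact absurd rfl hvz
            | exact absurd rfl hwz
            | (left; ring1)
            | (right; ring1)))
  rcases key with k | k <;> rw [k] <;> assumption

/-- No two coeval independent edges among the first `m` vertices interleave. -/
def GoodUpTo (adj : ℕ → ℕ → Prop) (p : ℕ → ℝ) (m : ℕ) : Prop :=
  (∀ u v, u < m → v < m → p u = p v → u = v) ∧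
  ∀ i u v w z, i ≤ u → i ≤ v → i ≤ w → i ≤ z → u < i + 5 → v < i + 5 → w < i + 5 → z < i + 5 →
    u < m → v < m → w < m → z < m → u ≠ w → u ≠ z → v ≠ w → v ≠ z → adj u v → adj w z →
    0 ≤ sepv (p u) (p v) (p w) (p z)

/-- The four vertex pairs that must not both be edges when `x` is put between `a` and `b`. -/
def Okq (adj : ℕ → ℕ → Prop) (x a b c d : ℕ) : Prop :=
  ¬ (adj x c ∧ adj a b) ∧ ¬ (adj x d ∧ adj a b) ∧ ¬ (adj a c ∧ adj x d) ∧ ¬ (adj x c ∧ adj b d)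

theorem pick_d {P Q R S T : Prop} (h : P ∨ Q ∨ R ∨ S ∨ T) (n : ¬ S) : T ∨ P ∨ R ∨ Q := by tauto
theorem pick_c {P Q R S T : Prop} (h : P ∨ Q ∨ R ∨ S ∨ T) (n : ¬ R) : T ∨ P ∨ S ∨ Q := by tauto
theorem pick_b {P Q R S T : Prop} (h : P ∨ Q ∨ R ∨ S ∨ T) (n : ¬ Q) : P ∨ T ∨ R ∨ S := by tauto
theorem pick_a {P Q R S T : Prop} (h : P ∨ Q ∨ R ∨ S ∨ T) (n : ¬ P) : T ∨ Q ∨ R ∨ S := by tauto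

theorem ins_step (adj : ℕ → ℕ → Prop) (hsym : ∀ u v, adj u v → adj v u) (hirr : ∀ u, ¬ adj u u)
    (p : ℕ → ℝ) (i a b c d : ℕ) (hp : GoodUpTo adj p (i + 4))
    (hall : ∀ k, i ≤ k → k < i + 4 → k = a ∨ k = b ∨ k = c ∨ k = d)
    (ha : a < i + 4) (hb : b < i + 4) (hc : c < i + 4) (hd : d < i + 4)
    (hab : a ≠ b) (hac : a ≠ c) (had : a ≠ d) (hbc : b ≠ c) (hbd : b ≠ d) (hcd : c ≠ d)
    (hs : sepv (p a) (p c) (p b) (p d) < 0) (hok : Okq adj (i + 4) a b c d) :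
    ∃ q : ℕ → ℝ, GoodUpTo adj q (i + 5) ∧
      sepv (q (i + 4)) (q c) (q a) (q b) < 0 ∧ sepv (q (i + 4)) (q d) (q a) (q b) < 0 ∧
      sepv (q a) (q c) (q (i + 4)) (q d) < 0 ∧ sepv (q (i + 4)) (q c) (q b) (q d) < 0 := by
  obtain ⟨x, hxU, s1, s2, s3, s4⟩ := sepv_insert hs ((Finset.range (i + 4)).image p)
  have hxne : ∀ k, k < i + 4 → p k ≠ x := by
    intro k hk he
    exact hxU (Finset.mem_image.2 ⟨k, Finset.mem_range.2 hk, he⟩)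
  obtain ⟨q, hqx, hq⟩ : ∃ q : ℕ → ℝ, q (i + 4) = x ∧ ∀ k, k < i + 4 → q k = p k :=
    ⟨Function.update p (i + 4) x, by simp, fun k hk => by
      rw [Function.update_of_ne (by omega)]⟩
  rw [← hqx, ← hq _ hc, ← hq _ ha, ← hq _ hb] at s1
  rw [← hqx, ← hq _ hd, ← hq _ ha, ← hq _ hb] at s2
  rw [← hqx, ← hq _ hd, ← hq _ ha, ← hq _ hc] at s3
  rw [← hqx, ← hq _ hd, ← hq _ hc, ← hq _ hb] at s4
  refine ⟨q, ⟨?_, ?_⟩, s1, s2, s3, s4⟩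
  · intro u v hu hv he
    rcases Nat.lt_succ_iff_lt_or_eq.1 hu with hu | rfl <;>
      rcases Nat.lt_succ_iff_lt_or_eq.1 hv with hv | rfl
    · exact hp.1 u v hu hv (by rw [← hq u hu, ← hq v hv, he])
    · exact absurd (by rw [← hq u hu, he, hqx]) (hxne u hu)
    · exact absurd (by rw [← hq v hv, ← he, hqx]) (hxne v hv)
    · rfl
  · intro j u v w z hju hjv hjw hjz hu hv hw hz hu' hv' hw' hz' huw huz hvw hvz huv hwz
    have nuv : u ≠ v := by rintro rfl; exact hirr _ huv
    have nwz : w ≠ z := by rintro rfl; exact hirr _ hwz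
    by_cases hold : u ≠ i + 4 ∧ v ≠ i + 4 ∧ w ≠ i + 4 ∧ z ≠ i + 4
    · obtain ⟨o1, o2, o3, o4⟩ := hold
      rw [hq u (by omega), hq v (by omega), hq w (by omega), hq z (by omega)]
      exact hp.2 j u v w z hju hjv hjw hjz hu hv hw hz (by omega) (by omega) (by omega) (by omega)
        huw huz hvw hvz huv hwz
    have hij : i ≤ j := by omega
    have mem : ∀ k, j ≤ k → k < i + 5 → k = a ∨ k = b ∨ k = c ∨ k = d ∨ k = i + 4 := by
      intro k hk hk'
      rcases Nat.lt_succ_iff_lt_or_eq.1 hk' with h | h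
      · rcases hall k (by omega) h with h | h | h | h <;> simp [h]
      · simp [h]
    have mu := mem u hju hu'
    have mv := mem v hjv hv'
    have mw := mem w hjw hw'
    have mz := mem z hjz hz'
    obtain ⟨k1, k2, k3, k4⟩ := hok
    have T : ∀ A B C D : ℕ, sepv (q A) (q C) (q B) (q D) < 0 → ¬ (adj A C ∧ adj B D) →
        (u = A ∨ u = B ∨ u = C ∨ u = D) → (v = A ∨ v = B ∨ v = C ∨ v = D) →
        (w = A ∨ w = B ∨ w = C ∨ w = D) → (z = A ∨ z = B ∨ z = C ∨ z = D) →
        0 ≤ sepv (q u) (q v) (q w) (q z) := by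
      intro A B C D h1 h2 h3 h4 h5 h6
      exact quad_ok adj hsym q A B C D h1 h2 u v w z h3 h4 h5 h6 nuv huw huz hvw hvz nwz huv hwz
    by_cases nd : u ≠ d ∧ v ≠ d ∧ w ≠ d ∧ z ≠ d
    · exact T (i + 4) a c b s1 k1 (pick_d mu nd.1) (pick_d mv nd.2.1)
        (pick_d mw nd.2.2.1) (pick_d mz nd.2.2.2)
    by_cases nc : u ≠ c ∧ v ≠ c ∧ w ≠ c ∧ z ≠ c
    · exact T (i + 4) a d b s2 k2 (pick_c mu nc.1) (pick_c mv nc.2.1)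
        (pick_c mw nc.2.2.1) (pick_c mz nc.2.2.2)
    by_cases nb : u ≠ b ∧ v ≠ b ∧ w ≠ b ∧ z ≠ b
    · exact T a (i + 4) c d s3 k3 (pick_b mu nb.1) (pick_b mv nb.2.1)
        (pick_b mw nb.2.2.1) (pick_b mz nb.2.2.2)
    by_cases na : u ≠ a ∧ v ≠ a ∧ w ≠ a ∧ z ≠ a
    · exact T (i + 4) b c d s4 k4 (pick_a mu na.1) (pick_a mv na.2.1)
        (pick_a mw na.2.2.1) (pick_a mz na.2.2.2)
    exfalso
    have hsub : ({a, b, c, d, i + 4} : Finset ℕ) ⊆ {u, v, w, z} := by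
      intro k hk
      simp only [Finset.mem_insert, Finset.mem_singleton] at hk ⊢
      have cov : ∀ k, ¬ (u ≠ k ∧ v ≠ k ∧ w ≠ k ∧ z ≠ k) → k = u ∨ k = v ∨ k = w ∨ k = z := by
        intro k hk
        by_contra h
        push Not at h
        exact hk ⟨h.1.symm, h.2.1.symm, h.2.2.1.symm, h.2.2.2.symm⟩
      apply cov
      rcases hk with rfl | rfl | rfl | rfl | rfl <;> assumption
    have hcard : ({a, b, c, d, i + 4} : Finset ℕ).card = 5 := by
      rw [Finset.card_insert_of_notMem, Finset.card_insert_of_notMem,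
        Finset.card_insert_of_notMem, Finset.card_insert_of_notMem, Finset.card_singleton] <;>
      simp only [Finset.mem_insert, Finset.mem_singleton, not_or]
      · exact hd.ne
      · exact ⟨hcd, hc.ne⟩
      · exact ⟨hbc, hbd, hb.ne⟩
      · exact ⟨hab, hac, had, ha.ne⟩
    have := Finset.card_le_card hsub
    rw [hcard] at this
    have := this.trans Finset.card_le_four
    omega

/-! ### The finite-state argument -/

/-- State of a window of four consecutive vertices: the six adjacencies (0 or 1), the numbers of
later neighbours of the four vertices, and which of the three cyclic orders are realizable. -/
structure St where
  e01 : ℕ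
  e02 : ℕ
  e03 : ℕ
  e12 : ℕ
  e13 : ℕ
  e23 : ℕ
  r0 : ℕ
  r1 : ℕ
  r2 : ℕ
  r3 : ℕ
  f0 : ℕ
  f1 : ℕ
  f2 : ℕ

/-- Call-by-value evaluation, to speed up reduction. -/
def force (k : ℕ) (f : ℕ → Bool) : Bool := match k with
  | 0 => f 0
  | j + 1 => f (j + 1)

theorem force_eq (k : ℕ) (f : ℕ → Bool) : force k f = f k := by
  cases k <;> rfl

def okb (xc ab xd ac bd : ℕ) : Bool :=
  Nat.beq (xc * ab + xd * ab + ac * xd + xc * bd) 0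

def bit (b : Bool) : ℕ := match b with
  | true => 1
  | false => 0

def St.valid (s : St) (n0 n1 n2 n3 : ℕ) : Bool :=
  Nat.beq s.r0 n0 && Nat.ble n1 s.r1 && Nat.ble n2 s.r2 && Nat.ble n3 s.r3 &&
  Nat.ble (n0 + n1 + n2 + n3) 3 && Nat.ble 3 (s.r0 + s.r1 + s.r2 + s.r3) &&
  (Nat.beq (s.r1 + s.r2 + s.r3 + s.r0 + 3) (2 * (n0 + n1 + n2 + n3)) ||
    Nat.ble (2 * (n0 + n1 + n2 + n3)) (s.r1 + s.r2 + s.r3 + s.r0)) &&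
  -- no diamond
  Nat.ble (s.e01 + s.e02 + s.e12 + n0 + n1 + n2) 4 &&
  Nat.ble (s.e01 + s.e03 + s.e13 + n0 + n1 + n3) 4 &&
  Nat.ble (s.e02 + s.e03 + s.e23 + n0 + n2 + n3) 4 &&
  Nat.ble (s.e12 + s.e13 + s.e23 + n1 + n2 + n3) 4 &&
  -- no `K_{2,3}`
  Nat.ble (s.e02 + s.e03 + n0 + s.e12 + s.e13 + n1) 5 &&
  Nat.ble (s.e01 + s.e03 + n0 + s.e12 + s.e23 + n2) 5 &&
  Nat.ble (s.e01 + s.e02 + n0 + s.e13 + s.e23 + n3) 5 &&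
  Nat.ble (s.e01 + s.e02 + s.e03 + n1 + n2 + n3) 5 &&
  Nat.ble (s.e01 + s.e13 + n1 + s.e02 + s.e23 + n2) 5 &&
  Nat.ble (s.e01 + s.e12 + n1 + s.e03 + s.e23 + n3) 5 &&
  Nat.ble (s.e01 + s.e12 + s.e13 + n0 + n2 + n3) 5 &&
  Nat.ble (s.e02 + s.e12 + n2 + s.e03 + s.e13 + n3) 5 &&
  Nat.ble (s.e02 + s.e12 + s.e23 + n0 + n1 + n3) 5 &&
  Nat.ble (s.e03 + s.e13 + s.e23 + n0 + n1 + n2) 5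

def St.g0 (s : St) (n0 n1 n2 n3 : ℕ) : Bool :=
  (Nat.beq s.f0 1 && (okb n2 s.e01 n3 s.e02 s.e13 || okb n1 s.e03 n2 s.e13 s.e02)) ||
  (Nat.beq s.f1 1 && okb n2 s.e13 n0 s.e12 s.e03) ||
  (Nat.beq s.f2 1 && okb n0 s.e13 n2 s.e01 s.e23)

def St.g1 (s : St) (n0 n1 n2 n3 : ℕ) : Bool :=
  (Nat.beq s.f0 1 && okb n0 s.e23 n1 s.e02 s.e13) ||
  (Nat.beq s.f1 1 && okb n0 s.e23 n1 s.e03 s.e12) ||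
  (Nat.beq s.f2 1 && (okb n1 s.e02 n3 s.e01 s.e23 || okb n2 s.e03 n1 s.e23 s.e01))

def St.g2 (s : St) (n0 n1 n2 n3 : ℕ) : Bool :=
  (Nat.beq s.f0 1 && okb n3 s.e12 n0 s.e13 s.e02) ||
  (Nat.beq s.f1 1 && (okb n3 s.e01 n2 s.e03 s.e12 || okb n1 s.e02 n3 s.e12 s.e03)) ||
  (Nat.beq s.f2 1 && okb n3 s.e12 n0 s.e23 s.e01)

def St.next (s : St) (n0 n1 n2 n3 : ℕ) : St :=
  ⟨s.e12, s.e13, n1, s.e23, n2, n3, s.r1 - n1, s.r2 - n2, s.r3 - n3, 3 - (n0 + n1 + n2 + n3),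
    bit (s.g0 n0 n1 n2 n3), bit (s.g1 n0 n1 n2 n3), bit (s.g2 n0 n1 n2 n3)⟩

def St.lo (s : St) : ℕ :=
  s.e01 + 2 * s.e02 + 4 * s.e03 + 8 * s.e12 + 16 * s.e13 + 32 * s.e23

def St.hi (s : St) : ℕ :=
  s.r0 + 4 * s.r1 + 16 * s.r2 + 64 * s.r3 + 256 * s.f0 + 512 * s.f1 + 1024 * s.f2

def decodeSt (m q : ℕ) : St :=
  ⟨m % 2, m / 2 % 2, m / 4 % 2, m / 8 % 2, m / 16 % 2, m / 32 % 2,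
    q % 4, q / 4 % 4, q / 16 % 4, q / 64 % 4, q / 256 % 2, q / 512 % 2, q / 1024 % 2⟩

/-- The reachable states: row `m` lists the possible `St.hi` for states with `St.lo = m`. -/
def table : List (List ℕ) :=
  [[1937, 1938, 1940, 1941, 1942, 1943, 1944, 1945, 1946, 1947, 1948, 1949, 1950, 1953, 1954, 1955,
    1956, 1957, 1958, 1959, 1960, 1961, 1962, 1963, 1965, 1966, 1970, 1971, 1973, 1974, 1975, 1977,
    1978, 2002, 2003, 2005, 2006, 2007, 2008, 2009, 2010, 2011, 2013, 2014, 2018, 2019, 2021, 2022,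
    2023, 2025, 2026, 2035, 2038, 2047],
  [913, 914, 916, 917, 918, 920, 921, 929, 930, 932, 933, 934, 936, 937, 1953, 1954, 1956, 1957,
    1958, 1960, 1961, 1970, 1973, 2002, 2005, 2006, 2008, 2009, 2018, 2021, 2042],
  [1669, 1672, 1674, 1681, 1682, 1684, 1685, 1686, 1688, 1689, 1690, 1697, 1698, 1700, 1701, 1702,
    1704, 1705, 1925, 1926, 1928, 1929, 1930, 1932, 1933, 1940, 1941, 1942, 1944, 1945, 1946, 1948,
    1949, 1956, 1957, 1958, 1960, 1961, 1990, 1993, 1994, 1996, 1997, 2002, 2005, 2006, 2008, 2009,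
    2018, 2021, 2030],
  [645, 657, 660, 661, 901, 904, 913, 916, 917, 920, 1428, 1681, 1684, 1697, 1700, 1937, 1940, 1941,
    1944, 1953, 1956, 2025],
  [1361, 1364, 1365, 1368, 1376, 1377, 1380, 1386, 1425, 1426, 1428, 1429, 1430, 1432, 1433, 1441,
    1442, 1444, 1445, 1448, 1449, 1876, 1877, 1878, 1880, 1881, 1882, 1884, 1885, 1888, 1889, 1890,
    1892, 1893, 1894, 1896, 1897, 1898, 1900, 1901, 1905, 1906, 1908, 1909, 1910, 1912, 1913, 1940,
    1941, 1942, 1944, 1945, 1946, 1948, 1949, 1953, 1954, 1956, 1957, 1958, 1960, 1961, 1970, 1973,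
    1982],
  [357, 849, 852, 853, 856, 864, 865, 868, 869, 872, 1425, 1428, 1444, 1888, 1889, 1892, 1893, 1896,
    1905, 1908, 1937, 1940, 1941, 1944, 1953, 1956, 1977],
  [1113, 1413, 1416, 1425, 1428, 1432, 1609, 1617, 1620, 1621, 1624, 1632, 1633, 1636, 1637, 1640,
    1861, 1864, 1865, 1868, 1876, 1877, 1880, 1881, 1884, 1892, 1893, 1896, 1925, 1928, 1929, 1932,
    1937, 1940, 1941, 1944, 1953, 1956, 1965],
  [852, 1632, 1876, 1888, 1960],
  [1413, 1416, 1418, 1425, 1426, 1428, 1429, 1430, 1433, 1434, 1441, 1442, 1445, 1446, 1922, 1923,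
    1925, 1926, 1927, 1928, 1929, 1930, 1937, 1938, 1939, 1940, 1941, 1942, 1943, 1945, 1946, 1953,
    1954, 1955, 1957, 1958, 1987, 1990, 1991, 1993, 1994, 2002, 2003, 2005, 2006, 2018, 2027],
  [389, 401, 404, 405, 898, 901, 913, 914, 916, 917, 1425, 1428, 1441, 1681, 1937, 1938, 1940, 1941,
    1953, 2022],
  [1157, 1169, 1172, 1173, 1413, 1416, 1417, 1425, 1428, 1429, 1666, 1669, 1670, 1681, 1682, 1684,
    1685, 1922, 1925, 1926, 1928, 1929, 1937, 1938, 1940, 1941, 2010],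
  [2005],
  [1346, 1349, 1350, 1352, 1353, 1361, 1362, 1364, 1365, 1366, 1368, 1369, 1376, 1377, 1378, 1380,
    1381, 1410, 1413, 1414, 1416, 1417, 1425, 1426, 1428, 1429, 1441, 1450],
  [337, 340, 1361, 1364, 1376, 1445],
  [1093, 1105, 1108, 1349, 1352, 1361, 1364, 1433],
  [1428],
  [1617, 1620, 1621, 1624, 1632, 1633, 1636, 1642, 1681, 1682, 1684, 1685, 1686, 1689, 1697, 1698,
    1701, 1702, 1873, 1874, 1875, 1876, 1877, 1878, 1879, 1880, 1881, 1882, 1888, 1889, 1890, 1891,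
    1892, 1893, 1894, 1895, 1897, 1898, 1905, 1906, 1907, 1909, 1910, 1937, 1938, 1939, 1940, 1941,
    1942, 1943, 1945, 1946, 1953, 1954, 1955, 1957, 1958, 1970, 1979],
  [613, 849, 850, 852, 853, 864, 865, 866, 868, 869, 1632, 1681, 1684, 1697, 1888, 1889, 1890, 1892,
    1893, 1905, 1937, 1938, 1940, 1941, 1953, 1974],
  [1602, 1605, 1606, 1608, 1609, 1617, 1618, 1620, 1621, 1622, 1624, 1625, 1632, 1633, 1634, 1636,
    1637, 1666, 1669, 1670, 1672, 1673, 1681, 1682, 1684, 1685, 1697, 1706],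
  [593, 596, 1617, 1620, 1632, 1701],
  [864, 1120, 1125, 1318, 1361, 1362, 1364, 1365, 1376, 1377, 1380, 1577, 1617, 1620, 1621, 1624,
    1632, 1633, 1636, 1810, 1813, 1814, 1816, 1817, 1825, 1826, 1828, 1829, 1830, 1832, 1833, 1840,
    1841, 1842, 1844, 1845, 1873, 1874, 1876, 1877, 1878, 1880, 1881, 1888, 1889, 1890, 1892, 1893,
    1905, 1914],
  [801, 804, 1825, 1828, 1840, 1873, 1876, 1888, 1909],
  [1024, 1045, 1108, 1536, 1557, 1560, 1569, 1572, 1605, 1608, 1617, 1620, 1632, 1641],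
  [512, 1636],
  [1110, 1350, 1361, 1362, 1365, 1377, 1378, 1666, 1669, 1681, 1682, 1858, 1859, 1861, 1862, 1873,
    1874, 1875, 1877, 1878, 1889, 1890, 1922, 1923, 1925, 1926, 1937, 1938, 1959],
  [849, 1873, 1954],
  [1093, 1105, 1602, 1605, 1617, 1686],
  [1681],
  [1024, 1045, 1105, 1280, 1298, 1301, 1313, 1346, 1349, 1361, 1382],
  [256, 1377],
  [1024, 1109],
  [],
  [849, 852, 853, 856, 874, 901, 904, 914, 917, 918, 921, 922, 1858, 1861, 1862, 1863, 1864, 1865,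
    1866, 1867, 1868, 1869, 1870, 1873, 1874, 1875, 1876, 1877, 1878, 1879, 1880, 1881, 1882, 1883,
    1885, 1886, 1890, 1891, 1893, 1894, 1895, 1897, 1898, 1922, 1923, 1925, 1926, 1927, 1928, 1929,
    1930, 1931, 1933, 1934, 1938, 1939, 1941, 1942, 1943, 1945, 1946, 1955, 1958, 1967],
  [834, 837, 838, 840, 841, 849, 850, 852, 853, 854, 856, 857, 866, 869, 898, 901, 902, 904, 905,
    914, 917, 938],
  [601, 901, 904, 905, 1602, 1605, 1606, 1608, 1609, 1610, 1617, 1618, 1620, 1621, 1622, 1624, 1625,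
    1861, 1862, 1864, 1865, 1866, 1868, 1869, 1876, 1877, 1878, 1880, 1881, 1922, 1925, 1926, 1928,
    1929, 1938, 1941, 1950],
  [581, 593, 596, 837, 840, 849, 852, 921],
  [345, 809, 849, 852, 853, 856, 1280, 1306, 1346, 1349, 1350, 1352, 1353, 1361, 1362, 1364, 1365,
    1368, 1798, 1801, 1802, 1804, 1805, 1810, 1813, 1814, 1816, 1817, 1818, 1820, 1821, 1825, 1826,
    1828, 1829, 1830, 1832, 1833, 1861, 1862, 1864, 1865, 1866, 1868, 1869, 1873, 1874, 1876, 1877,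
    1878, 1880, 1881, 1890, 1893, 1902],
  [256, 277, 340, 768, 789, 792, 801, 804, 837, 840, 849, 852, 873],
  [1536, 1557, 1560, 1801, 1804, 1813, 1816, 1861, 1864, 1873, 1876, 1885],
  [512, 768, 856],
  [342, 898, 901, 902, 1346, 1349, 1350, 1353, 1354, 1361, 1362, 1365, 1366, 1858, 1859, 1861, 1862,
    1863, 1865, 1866, 1873, 1874, 1875, 1877, 1878, 1922, 1923, 1925, 1926, 1938, 1947],
  [325, 337, 834, 837, 849, 918],
  [1349, 1602, 1605, 1858, 1861, 1930],
  [901],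
  [256, 277, 325, 1280, 1286, 1289, 1298, 1301, 1346, 1349, 1361, 1370],
  [256, 341],
  [1024, 1280, 1353],
  [],
  [598, 806, 849, 850, 853, 1536, 1562, 1602, 1605, 1606, 1609, 1617, 1618, 1621, 1792, 1795, 1798,
    1799, 1801, 1802, 1810, 1811, 1813, 1814, 1815, 1817, 1818, 1825, 1826, 1827, 1829, 1830, 1858,
    1859, 1861, 1862, 1863, 1865, 1866, 1873, 1874, 1875, 1877, 1878, 1890, 1899],
  [512, 533, 593, 768, 786, 789, 801, 834, 837, 849, 870],
  [512, 533, 581, 1536, 1542, 1545, 1554, 1557, 1602, 1605, 1617, 1626],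
  [512, 597],
  [1280, 1536, 1792, 1798, 1801, 1810, 1813, 1825, 1834],
  [256, 512, 768, 805],
  [512, 1024, 1536, 1561],
  [],
  [1280, 1298, 1792, 1795, 1798, 1810, 1858, 1879],
  [256, 768, 850],
  [1024, 1536, 1606],
  [],
  [256, 1024, 1280, 1302],
  [],
  [],
  []]

noncomputable def rowAt (t : List (List ℕ)) : ℕ → List ℕ :=
  List.rec (fun _ => []) (fun r _ ih m => Nat.casesOn m r ih) t

noncomputable def memb (l : List ℕ) (m : ℕ) : Bool :=
  List.rec false (fun r _ ih => Nat.beq r m || ih) l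

noncomputable def St.inT (s : St) : Bool :=
  force s.lo fun m => force s.hi fun q => memb (rowAt table m) q

def St.forced (s : St) (F : St → Bool) : Bool :=
  force s.e01 fun a => force s.e02 fun b => force s.e03 fun c => force s.e12 fun d =>
  force s.e13 fun e => force s.e23 fun f => force s.r0 fun r0 => force s.r1 fun r1 =>
  force s.r2 fun r2 => force s.r3 fun r3 => force s.f0 fun f0 => force s.f1 fun f1 =>
  force s.f2 fun f2 => F ⟨a, b, c, d, e, f, r0, r1, r2, r3, f0, f1, f2⟩

theorem St.forced_eq (s : St) (F : St → Bool) : s.forced F = F s := by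
  simp only [St.forced, force_eq]


noncomputable def checkN (s : St) (n0 n1 n2 n3 : ℕ) : Bool :=
  !(s.valid n0 n1 n2 n3) || (s.next n0 n1 n2 n3).inT

noncomputable def check2 (s : St) (n0 n1 : ℕ) : Bool :=
  checkN s n0 n1 0 0 && checkN s n0 n1 0 1 && checkN s n0 n1 1 0 && checkN s n0 n1 1 1

noncomputable def check4 (s : St) : Bool :=
  Nat.ble 2 s.r0 || (check2 s s.r0 0 && check2 s s.r0 1)

noncomputable def checkSt (s : St) : Bool :=
  (Nat.beq s.f0 1 || Nat.beq s.f1 1 || Nat.beq s.f2 1) && check4 s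

noncomputable def checkRow (m : ℕ) : List ℕ → Bool
  | [] => true
  | q :: l => (decodeSt m q).forced checkSt && checkRow m l

noncomputable def checkRows : ℕ → List (List ℕ) → Bool
  | _, [] => true
  | m, r :: l => checkRow m r && checkRows (m + 1) l

def initSt (a b c d e f : ℕ) : St :=
  ⟨a, b, c, d, e, f, 3 - a - b - c, 3 - a - d - e, 3 - b - d - f, 3 - c - e - f,
    1 - b * e, 1 - c * d, 1 - a * f⟩

theorem table_ok : checkRows 0 table = true := by decide +kernel

theorem init_fin : ∀ a b c d e f : Fin 2,
    a.val + b.val + c.val + d.val + e.val + f.val ≤ 4 →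
    (initSt a.val b.val c.val d.val e.val f.val).inT = true := by decide +kernel

theorem init_ok (a b c d e f : ℕ) (ha : a < 2) (hb : b < 2) (hc : c < 2) (hd : d < 2)
    (he : e < 2) (hf : f < 2) (h : a + b + c + d + e + f ≤ 4) :
    (initSt a b c d e f).inT = true :=
  init_fin ⟨a, ha⟩ ⟨b, hb⟩ ⟨c, hc⟩ ⟨d, hd⟩ ⟨e, he⟩ ⟨f, hf⟩ h

theorem checkRow_mem (m : ℕ) (l : List ℕ) (h : checkRow m l = true) (q : ℕ)
    (hq : memb l q = true) : checkSt (decodeSt m q) = true := by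
  induction l with
  | nil => simp [memb] at hq
  | cons r l ih =>
    simp only [checkRow, St.forced_eq, memb, Bool.and_eq_true, Bool.or_eq_true, Nat.beq_eq] at h hq
    rcases hq with hq | hq
    · rw [← hq]; exact h.1
    · exact ih h.2 hq

theorem checkRows_mem (k : ℕ) (t : List (List ℕ)) (h : checkRows k t = true) (m q : ℕ)
    (hq : memb (rowAt t m) q = true) : checkSt (decodeSt (k + m) q) = true := by
  induction t generalizing k m with
  | nil => simp [rowAt, memb] at hq
  | cons r l ih =>
    simp only [checkRows, Bool.and_eq_true] at h
    cases m with
    | zero =>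
      exact checkRow_mem k r h.1 q hq
    | succ m =>
      have := ih (k + 1) h.2 m hq
      rwa [show k + 1 + m = k + (m + 1) by ring] at this

theorem decode_eq (s : St) (h1 : s.e01 < 2) (h2 : s.e02 < 2) (h3 : s.e03 < 2) (h4 : s.e12 < 2)
    (h5 : s.e13 < 2) (h6 : s.e23 < 2) (k0 : s.r0 < 4) (k1 : s.r1 < 4) (k2 : s.r2 < 4)
    (k3 : s.r3 < 4) (l0 : s.f0 < 2) (l1 : s.f1 < 2) (l2 : s.f2 < 2) :
    decodeSt s.lo s.hi = s := by
  rcases s with ⟨a, b, c, d, e, f, r0, r1, r2, r3, f0, f1, f2⟩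
  simp only at *
  simp only [decodeSt, St.lo, St.hi, St.mk.injEq]
  refine ⟨?_, ?_, ?_, ?_, ?_, ?_, ?_, ?_, ?_, ?_, ?_, ?_, ?_⟩ <;> omega

theorem inT_check (s : St) (h1 : s.e01 < 2) (h2 : s.e02 < 2) (h3 : s.e03 < 2) (h4 : s.e12 < 2)
    (h5 : s.e13 < 2) (h6 : s.e23 < 2) (k0 : s.r0 < 4) (k1 : s.r1 < 4) (k2 : s.r2 < 4)
    (k3 : s.r3 < 4) (l0 : s.f0 < 2) (l1 : s.f1 < 2) (l2 : s.f2 < 2) (hs : s.inT = true) :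
    checkSt s = true := by
  simp only [St.inT, force_eq] at hs
  have := checkRows_mem 0 table table_ok s.lo s.hi hs
  rwa [Nat.zero_add, decode_eq s h1 h2 h3 h4 h5 h6 k0 k1 k2 k3 l0 l1 l2] at this

theorem checkSt_some (s : St) (h : checkSt s = true) : s.f0 = 1 ∨ s.f1 = 1 ∨ s.f2 = 1 := by
  simp only [checkSt, Bool.and_eq_true, Bool.or_eq_true, Nat.beq_eq] at h
  tauto

theorem checkSt_step (s : St) (h : checkSt s = true) (n0 n1 n2 n3 : ℕ) (h0 : n0 < 2)
    (h1 : n1 < 2) (h2 : n2 < 2) (h3 : n3 < 2) (hv : s.valid n0 n1 n2 n3 = true) :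
    (s.next n0 n1 n2 n3).inT = true := by
  have hr : s.r0 = n0 := by
    simp only [St.valid, Bool.and_eq_true, Nat.beq_eq] at hv
    tauto
  have : checkN s n0 n1 n2 n3 = true := by
    simp only [checkSt, check4, check2, Bool.and_eq_true, Bool.or_eq_true, hr] at h
    have h9 : ¬ Nat.ble 2 n0 = true := by rw [Nat.ble_eq]; omega
    replace h := h.2.resolve_left h9
    interval_cases n1 <;> interval_cases n2 <;> interval_cases n3 <;> tauto
  simpa [checkN, hv] using this

/-- The combinatorial data used by the finite-state argument. -/
structure Story (n : ℕ) (adj : ℕ → ℕ → Prop) (A R : ℕ → ℕ → ℕ) : Prop where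
  hn : 4 ≤ n
  symm : ∀ u v, adj u v → adj v u
  irr : ∀ u, ¬ adj u u
  lt2 : ∀ u v, A u v < 2
  one : ∀ u v, adj u v → A u v = 1
  asymm : ∀ u v, A u v = A v u
  rec_eq : ∀ u k, k < n → R u k = A u k + R u (k + 1)
  le3 : ∀ u k, R u k ≤ 3
  far : ∀ i, R i (i + 5) = 0
  fin : ∀ u, R u n = 0
  deg : ∀ i, i + 4 < n →
    R (i + 4) (i + 5) + A i (i + 4) + A (i + 1) (i + 4) + A (i + 2) (i + 4) + A (i + 3) (i + 4) = 3
  d0 : R 0 4 + A 0 1 + A 0 2 + A 0 3 = 3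
  d1 : R 1 4 + A 0 1 + A 1 2 + A 1 3 = 3
  d2 : R 2 4 + A 0 2 + A 1 2 + A 2 3 = 3
  d3 : R 3 4 + A 0 3 + A 1 3 + A 2 3 = 3
  cut : ∀ i, i + 4 < n → 3 ≤ R i (i + 4) + R (i + 1) (i + 4) + R (i + 2) (i + 4) + R (i + 3) (i + 4)
  dia : ∀ w x y z, w < x → x < y → y < z →
    A w x + A w y + A w z + A x y + A x z + A y z ≤ 4
  k23 : ∀ a b x y z, a ≠ b → x ≠ y → x ≠ z → y ≠ z →
    A a x + A a y + A a z + A b x + A b y + A b z ≤ 5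

def stAt (A R : ℕ → ℕ → ℕ) (i f0 f1 f2 : ℕ) : St :=
  ⟨A i (i + 1), A i (i + 2), A i (i + 3), A (i + 1) (i + 2), A (i + 1) (i + 3), A (i + 2) (i + 3),
    R i (i + 4), R (i + 1) (i + 4), R (i + 2) (i + 4), R (i + 3) (i + 4), f0, f1, f2⟩

def Ty0 (adj : ℕ → ℕ → Prop) (i : ℕ) : Prop :=
  ∃ p : ℕ → ℝ, GoodUpTo adj p (i + 4) ∧ sepv (p i) (p (i + 2)) (p (i + 1)) (p (i + 3)) < 0

def Ty1 (adj : ℕ → ℕ → Prop) (i : ℕ) : Prop :=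
  ∃ p : ℕ → ℝ, GoodUpTo adj p (i + 4) ∧ sepv (p i) (p (i + 3)) (p (i + 1)) (p (i + 2)) < 0

def Ty2 (adj : ℕ → ℕ → Prop) (i : ℕ) : Prop :=
  ∃ p : ℕ → ℝ, GoodUpTo adj p (i + 4) ∧ sepv (p i) (p (i + 1)) (p (i + 2)) (p (i + 3)) < 0

theorem okb_Okq (adj : ℕ → ℕ → Prop) (x a b c d v1 v2 v3 v4 v5 : ℕ)
    (h : okb v1 v2 v3 v4 v5 = true) (h1 : adj x c → v1 = 1) (h2 : adj a b → v2 = 1)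
    (h3 : adj x d → v3 = 1) (h4 : adj a c → v4 = 1) (h5 : adj b d → v5 = 1) :
    Okq adj x a b c d := by
  simp only [okb, Nat.beq_eq, Nat.add_eq_zero_iff, mul_eq_zero] at h
  refine ⟨?_, ?_, ?_, ?_⟩ <;> rintro ⟨k1, k2⟩
  · have := h1 k1; have := h2 k2; omega
  · have := h3 k1; have := h2 k2; omega
  · have := h4 k1; have := h3 k2; omega
  · have := h1 k1; have := h5 k2; omega

theorem comb001 {n : ℕ} {adj : ℕ → ℕ → Prop} {A R : ℕ → ℕ → ℕ} (S : Story n adj A R)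
    (i : ℕ) (h : Ty0 adj i) (hok : okb (A (i + 2) (i + 4)) (A i (i + 1)) (A (i + 3) (i + 4)) (A i (i + 2)) (A (i + 1) (i + 3)) = true) :
    Ty0 adj (i + 1) := by
  obtain ⟨p, hp, hs⟩ := h
  have so : ∀ u v, adj u v → A u v = 1 := S.one
  have so2 : ∀ u v, adj u v → A v u = 1 := fun u v h => S.one _ _ (S.symm _ _ h)
  obtain ⟨q, hq, hh⟩ := ins_step adj S.symm S.irr p i i (i + 1) (i + 2) (i + 3) hp
    (by omega) (by omega) (by omega) (by omega) (by omega) (by omega) (by omega) (by omega)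
    (by omega) (by omega) (by omega) (by unfold sepv at *; linarith)
    (okb_Okq adj _ _ _ _ _ _ _ _ _ _ hok (by solve_by_elim)
      (by solve_by_elim) (by solve_by_elim)
      (by solve_by_elim) (by solve_by_elim))
  refine ⟨q, hq, ?_⟩
  have hd := hh.2.2.2
  simp only [Nat.add_assoc, Nat.reduceAdd]
  unfold sepv at *
  linarith

theorem comb012 {n : ℕ} {adj : ℕ → ℕ → Prop} {A R : ℕ → ℕ → ℕ} (S : Story n adj A R)
    (i : ℕ) (h : Ty0 adj i) (hok : okb (A (i + 3) (i + 4)) (A (i + 1) (i + 2)) (A i (i + 4)) (A (i + 1) (i + 3)) (A i (i + 2)) = true) :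
    Ty2 adj (i + 1) := by
  obtain ⟨p, hp, hs⟩ := h
  have so : ∀ u v, adj u v → A u v = 1 := S.one
  have so2 : ∀ u v, adj u v → A v u = 1 := fun u v h => S.one _ _ (S.symm _ _ h)
  obtain ⟨q, hq, hh⟩ := ins_step adj S.symm S.irr p i (i + 1) (i + 2) (i + 3) i hp
    (by omega) (by omega) (by omega) (by omega) (by omega) (by omega) (by omega) (by omega)
    (by omega) (by omega) (by omega) (by unfold sepv at *; linarith)
    (okb_Okq adj _ _ _ _ _ _ _ _ _ _ hok (by solve_by_elim)
      (by solve_by_elim) (by solve_by_elim)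
      (by solve_by_elim) (by solve_by_elim))
  refine ⟨q, hq, ?_⟩
  have hd := hh.1
  simp only [Nat.add_assoc, Nat.reduceAdd]
  unfold sepv at *
  linarith

theorem comb023 {n : ℕ} {adj : ℕ → ℕ → Prop} {A R : ℕ → ℕ → ℕ} (S : Story n adj A R)
    (i : ℕ) (h : Ty0 adj i) (hok : okb (A i (i + 4)) (A (i + 2) (i + 3)) (A (i + 1) (i + 4)) (A i (i + 2)) (A (i + 1) (i + 3)) = true) :
    Ty1 adj (i + 1) := by
  obtain ⟨p, hp, hs⟩ := h
  have so : ∀ u v, adj u v → A u v = 1 := S.one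
  have so2 : ∀ u v, adj u v → A v u = 1 := fun u v h => S.one _ _ (S.symm _ _ h)
  obtain ⟨q, hq, hh⟩ := ins_step adj S.symm S.irr p i (i + 2) (i + 3) i (i + 1) hp
    (by omega) (by omega) (by omega) (by omega) (by omega) (by omega) (by omega) (by omega)
    (by omega) (by omega) (by omega) (by unfold sepv at *; linarith)
    (okb_Okq adj _ _ _ _ _ _ _ _ _ _ hok (by solve_by_elim)
      (by solve_by_elim) (by solve_by_elim)
      (by solve_by_elim) (by solve_by_elim))
  refine ⟨q, hq, ?_⟩
  have hd := hh.2.1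
  simp only [Nat.add_assoc, Nat.reduceAdd]
  unfold sepv at *
  linarith

theorem comb030 {n : ℕ} {adj : ℕ → ℕ → Prop} {A R : ℕ → ℕ → ℕ} (S : Story n adj A R)
    (i : ℕ) (h : Ty0 adj i) (hok : okb (A (i + 1) (i + 4)) (A i (i + 3)) (A (i + 2) (i + 4)) (A (i + 1) (i + 3)) (A i (i + 2)) = true) :
    Ty0 adj (i + 1) := by
  obtain ⟨p, hp, hs⟩ := h
  have so : ∀ u v, adj u v → A u v = 1 := S.one
  have so2 : ∀ u v, adj u v → A v u = 1 := fun u v h => S.one _ _ (S.symm _ _ h)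
  obtain ⟨q, hq, hh⟩ := ins_step adj S.symm S.irr p i (i + 3) i (i + 1) (i + 2) hp
    (by omega) (by omega) (by omega) (by omega) (by omega) (by omega) (by omega) (by omega)
    (by omega) (by omega) (by omega) (by unfold sepv at *; linarith)
    (okb_Okq adj _ _ _ _ _ _ _ _ _ _ hok (by solve_by_elim)
      (by solve_by_elim) (by solve_by_elim)
      (by solve_by_elim) (by solve_by_elim))
  refine ⟨q, hq, ?_⟩
  have hd := hh.2.2.1
  simp only [Nat.add_assoc, Nat.reduceAdd]
  unfold sepv at *
  linarith

theorem comb101 {n : ℕ} {adj : ℕ → ℕ → Prop} {A R : ℕ → ℕ → ℕ} (S : Story n adj A R)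
    (i : ℕ) (h : Ty1 adj i) (hok : okb (A (i + 3) (i + 4)) (A i (i + 1)) (A (i + 2) (i + 4)) (A i (i + 3)) (A (i + 1) (i + 2)) = true) :
    Ty2 adj (i + 1) := by
  obtain ⟨p, hp, hs⟩ := h
  have so : ∀ u v, adj u v → A u v = 1 := S.one
  have so2 : ∀ u v, adj u v → A v u = 1 := fun u v h => S.one _ _ (S.symm _ _ h)
  obtain ⟨q, hq, hh⟩ := ins_step adj S.symm S.irr p i i (i + 1) (i + 3) (i + 2) hp
    (by omega) (by omega) (by omega) (by omega) (by omega) (by omega) (by omega) (by omega)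
    (by omega) (by omega) (by omega) (by unfold sepv at *; linarith)
    (okb_Okq adj _ _ _ _ _ _ _ _ _ _ hok (by solve_by_elim)
      (by solve_by_elim) (by solve_by_elim)
      (by solve_by_elim) (by solve_by_elim))
  refine ⟨q, hq, ?_⟩
  have hd := hh.2.2.2
  simp only [Nat.add_assoc, Nat.reduceAdd]
  unfold sepv at *
  linarith

theorem comb113 {n : ℕ} {adj : ℕ → ℕ → Prop} {A R : ℕ → ℕ → ℕ} (S : Story n adj A R)
    (i : ℕ) (h : Ty1 adj i) (hok : okb (A (i + 2) (i + 4)) (A (i + 1) (i + 3)) (A i (i + 4)) (A (i + 1) (i + 2)) (A i (i + 3)) = true) :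
    Ty0 adj (i + 1) := by
  obtain ⟨p, hp, hs⟩ := h
  have so : ∀ u v, adj u v → A u v = 1 := S.one
  have so2 : ∀ u v, adj u v → A v u = 1 := fun u v h => S.one _ _ (S.symm _ _ h)
  obtain ⟨q, hq, hh⟩ := ins_step adj S.symm S.irr p i (i + 1) (i + 3) (i + 2) i hp
    (by omega) (by omega) (by omega) (by omega) (by omega) (by omega) (by omega) (by omega)
    (by omega) (by omega) (by omega) (by unfold sepv at *; linarith)
    (okb_Okq adj _ _ _ _ _ _ _ _ _ _ hok (by solve_by_elim)
      (by solve_by_elim) (by solve_by_elim)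
      (by solve_by_elim) (by solve_by_elim))
  refine ⟨q, hq, ?_⟩
  have hd := hh.1
  simp only [Nat.add_assoc, Nat.reduceAdd]
  unfold sepv at *
  linarith

theorem comb132 {n : ℕ} {adj : ℕ → ℕ → Prop} {A R : ℕ → ℕ → ℕ} (S : Story n adj A R)
    (i : ℕ) (h : Ty1 adj i) (hok : okb (A i (i + 4)) (A (i + 2) (i + 3)) (A (i + 1) (i + 4)) (A i (i + 3)) (A (i + 1) (i + 2)) = true) :
    Ty1 adj (i + 1) := by
  obtain ⟨p, hp, hs⟩ := h
  have so : ∀ u v, adj u v → A u v = 1 := S.one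
  have so2 : ∀ u v, adj u v → A v u = 1 := fun u v h => S.one _ _ (S.symm _ _ h)
  obtain ⟨q, hq, hh⟩ := ins_step adj S.symm S.irr p i (i + 3) (i + 2) i (i + 1) hp
    (by omega) (by omega) (by omega) (by omega) (by omega) (by omega) (by omega) (by omega)
    (by omega) (by omega) (by omega) (by unfold sepv at *; linarith)
    (okb_Okq adj _ _ _ _ _ _ _ _ _ _ hok (by solve_by_elim)
      (by solve_by_elim) (by solve_by_elim)
      (by solve_by_elim) (by solve_by_elim))
  refine ⟨q, hq, ?_⟩
  have hd := hh.2.1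
  simp only [Nat.add_assoc, Nat.reduceAdd]
  unfold sepv at *
  linarith

theorem comb120 {n : ℕ} {adj : ℕ → ℕ → Prop} {A R : ℕ → ℕ → ℕ} (S : Story n adj A R)
    (i : ℕ) (h : Ty1 adj i) (hok : okb (A (i + 1) (i + 4)) (A i (i + 2)) (A (i + 3) (i + 4)) (A (i + 1) (i + 2)) (A i (i + 3)) = true) :
    Ty2 adj (i + 1) := by
  obtain ⟨p, hp, hs⟩ := h
  have so : ∀ u v, adj u v → A u v = 1 := S.one
  have so2 : ∀ u v, adj u v → A v u = 1 := fun u v h => S.one _ _ (S.symm _ _ h)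
  obtain ⟨q, hq, hh⟩ := ins_step adj S.symm S.irr p i (i + 2) i (i + 1) (i + 3) hp
    (by omega) (by omega) (by omega) (by omega) (by omega) (by omega) (by omega) (by omega)
    (by omega) (by omega) (by omega) (by unfold sepv at *; linarith)
    (okb_Okq adj _ _ _ _ _ _ _ _ _ _ hok (by solve_by_elim)
      (by solve_by_elim) (by solve_by_elim)
      (by solve_by_elim) (by solve_by_elim))
  refine ⟨q, hq, ?_⟩
  have hd := hh.2.2.1
  simp only [Nat.add_assoc, Nat.reduceAdd]
  unfold sepv at *
  linarith

theorem comb202 {n : ℕ} {adj : ℕ → ℕ → Prop} {A R : ℕ → ℕ → ℕ} (S : Story n adj A R)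
    (i : ℕ) (h : Ty2 adj i) (hok : okb (A (i + 1) (i + 4)) (A i (i + 2)) (A (i + 3) (i + 4)) (A i (i + 1)) (A (i + 2) (i + 3)) = true) :
    Ty1 adj (i + 1) := by
  obtain ⟨p, hp, hs⟩ := h
  have so : ∀ u v, adj u v → A u v = 1 := S.one
  have so2 : ∀ u v, adj u v → A v u = 1 := fun u v h => S.one _ _ (S.symm _ _ h)
  obtain ⟨q, hq, hh⟩ := ins_step adj S.symm S.irr p i i (i + 2) (i + 1) (i + 3) hp
    (by omega) (by omega) (by omega) (by omega) (by omega) (by omega) (by omega) (by omega)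
    (by omega) (by omega) (by omega) (by unfold sepv at *; linarith)
    (okb_Okq adj _ _ _ _ _ _ _ _ _ _ hok (by solve_by_elim)
      (by solve_by_elim) (by solve_by_elim)
      (by solve_by_elim) (by solve_by_elim))
  refine ⟨q, hq, ?_⟩
  have hd := hh.2.2.2
  simp only [Nat.add_assoc, Nat.reduceAdd]
  unfold sepv at *
  linarith

theorem comb221 {n : ℕ} {adj : ℕ → ℕ → Prop} {A R : ℕ → ℕ → ℕ} (S : Story n adj A R)
    (i : ℕ) (h : Ty2 adj i) (hok : okb (A (i + 3) (i + 4)) (A (i + 1) (i + 2)) (A i (i + 4)) (A (i + 2) (i + 3)) (A i (i + 1)) = true) :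
    Ty2 adj (i + 1) := by
  obtain ⟨p, hp, hs⟩ := h
  have so : ∀ u v, adj u v → A u v = 1 := S.one
  have so2 : ∀ u v, adj u v → A v u = 1 := fun u v h => S.one _ _ (S.symm _ _ h)
  obtain ⟨q, hq, hh⟩ := ins_step adj S.symm S.irr p i (i + 2) (i + 1) (i + 3) i hp
    (by omega) (by omega) (by omega) (by omega) (by omega) (by omega) (by omega) (by omega)
    (by omega) (by omega) (by omega) (by unfold sepv at *; linarith)
    (okb_Okq adj _ _ _ _ _ _ _ _ _ _ hok (by solve_by_elim)
      (by solve_by_elim) (by solve_by_elim)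
      (by solve_by_elim) (by solve_by_elim))
  refine ⟨q, hq, ?_⟩
  have hd := hh.1
  simp only [Nat.add_assoc, Nat.reduceAdd]
  unfold sepv at *
  linarith

theorem comb213 {n : ℕ} {adj : ℕ → ℕ → Prop} {A R : ℕ → ℕ → ℕ} (S : Story n adj A R)
    (i : ℕ) (h : Ty2 adj i) (hok : okb (A i (i + 4)) (A (i + 1) (i + 3)) (A (i + 2) (i + 4)) (A i (i + 1)) (A (i + 2) (i + 3)) = true) :
    Ty0 adj (i + 1) := by
  obtain ⟨p, hp, hs⟩ := h
  have so : ∀ u v, adj u v → A u v = 1 := S.one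
  have so2 : ∀ u v, adj u v → A v u = 1 := fun u v h => S.one _ _ (S.symm _ _ h)
  obtain ⟨q, hq, hh⟩ := ins_step adj S.symm S.irr p i (i + 1) (i + 3) i (i + 2) hp
    (by omega) (by omega) (by omega) (by omega) (by omega) (by omega) (by omega) (by omega)
    (by omega) (by omega) (by omega) (by unfold sepv at *; linarith)
    (okb_Okq adj _ _ _ _ _ _ _ _ _ _ hok (by solve_by_elim)
      (by solve_by_elim) (by solve_by_elim)
      (by solve_by_elim) (by solve_by_elim))
  refine ⟨q, hq, ?_⟩
  have hd := hh.2.1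
  simp only [Nat.add_assoc, Nat.reduceAdd]
  unfold sepv at *
  linarith

theorem comb230 {n : ℕ} {adj : ℕ → ℕ → Prop} {A R : ℕ → ℕ → ℕ} (S : Story n adj A R)
    (i : ℕ) (h : Ty2 adj i) (hok : okb (A (i + 2) (i + 4)) (A i (i + 3)) (A (i + 1) (i + 4)) (A (i + 2) (i + 3)) (A i (i + 1)) = true) :
    Ty1 adj (i + 1) := by
  obtain ⟨p, hp, hs⟩ := h
  have so : ∀ u v, adj u v → A u v = 1 := S.one
  have so2 : ∀ u v, adj u v → A v u = 1 := fun u v h => S.one _ _ (S.symm _ _ h)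
  obtain ⟨q, hq, hh⟩ := ins_step adj S.symm S.irr p i (i + 3) i (i + 2) (i + 1) hp
    (by omega) (by omega) (by omega) (by omega) (by omega) (by omega) (by omega) (by omega)
    (by omega) (by omega) (by omega) (by unfold sepv at *; linarith)
    (okb_Okq adj _ _ _ _ _ _ _ _ _ _ hok (by solve_by_elim)
      (by solve_by_elim) (by solve_by_elim)
      (by solve_by_elim) (by solve_by_elim))
  refine ⟨q, hq, ?_⟩
  have hd := hh.2.2.1
  simp only [Nat.add_assoc, Nat.reduceAdd]
  unfold sepv at *
  linarith


theorem bit_lt (b : Bool) : bit b < 2 := by cases b <;> decide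

theorem bit_one {b : Bool} (h : bit b = 1) : b = true := by
  cases b
  · simp [bit] at h
  · rfl

def Inv (adj : ℕ → ℕ → Prop) (A R : ℕ → ℕ → ℕ) (i : ℕ) : Prop :=
  ∃ f0 f1 f2, f0 < 2 ∧ f1 < 2 ∧ f2 < 2 ∧ (stAt A R i f0 f1 f2).inT = true ∧
    (f0 = 1 → Ty0 adj i) ∧ (f1 = 1 → Ty1 adj i) ∧ (f2 = 1 → Ty2 adj i)

theorem Story.check {n : ℕ} {adj : ℕ → ℕ → Prop} {A R : ℕ → ℕ → ℕ} (S : Story n adj A R)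
    (i f0 f1 f2 : ℕ) (h0 : f0 < 2) (h1 : f1 < 2) (h2 : f2 < 2)
    (h : (stAt A R i f0 f1 f2).inT = true) : checkSt (stAt A R i f0 f1 f2) = true :=
  inT_check _ (S.lt2 _ _) (S.lt2 _ _) (S.lt2 _ _) (S.lt2 _ _) (S.lt2 _ _) (S.lt2 _ _)
    (Nat.lt_succ_of_le (S.le3 _ _)) (Nat.lt_succ_of_le (S.le3 _ _))
    (Nat.lt_succ_of_le (S.le3 _ _)) (Nat.lt_succ_of_le (S.le3 _ _)) h0 h1 h2 h

theorem Story.step {n : ℕ} {adj : ℕ → ℕ → Prop} {A R : ℕ → ℕ → ℕ} (S : Story n adj A R)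
    (i : ℕ) (hi : i + 4 < n) (h : Inv adj A R i) : Inv adj A R (i + 1) := by
  obtain ⟨f0, f1, f2, h0, h1, h2, hT, t0, t1, t2⟩ := h
  set s := stAt A R i f0 f1 f2 with hs
  have hck := S.check i f0 f1 f2 h0 h1 h2 hT
  have r0 : R i (i + 4) = A i (i + 4) + R i (i + 5) := S.rec_eq i (i + 4) hi
  have r1 : R (i + 1) (i + 4) = A (i + 1) (i + 4) + R (i + 1) (i + 5) := S.rec_eq _ (i + 4) hi
  have r2 : R (i + 2) (i + 4) = A (i + 2) (i + 4) + R (i + 2) (i + 5) := S.rec_eq _ (i + 4) hi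
  have r3 : R (i + 3) (i + 4) = A (i + 3) (i + 4) + R (i + 3) (i + 5) := S.rec_eq _ (i + 4) hi
  have hfar := S.far i
  have hdeg := S.deg i hi
  have hcut := S.cut i hi
  have hcut' : R (i + 1) (i + 5) + R (i + 2) (i + 5) + R (i + 3) (i + 5) + R (i + 4) (i + 5) = 0 ∨
      3 ≤ R (i + 1) (i + 5) + R (i + 2) (i + 5) + R (i + 3) (i + 5) + R (i + 4) (i + 5) := by
    rcases Nat.lt_or_ge (i + 5) n with h | h
    · right
      have := S.cut (i + 1) (by omega)
      simpa only [Nat.add_assoc, Nat.reduceAdd] using this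
    · left
      have : n = i + 5 := by omega
      rw [← this]
      simp only [S.fin]
  have hval : s.valid (A i (i + 4)) (A (i + 1) (i + 4)) (A (i + 2) (i + 4)) (A (i + 3) (i + 4))
      = true := by
    simp only [hs, St.valid, stAt, Bool.and_eq_true, Bool.or_eq_true, Nat.beq_eq, Nat.ble_eq,
      and_assoc]
    have b1 := S.asymm (i + 1) i
    have b2 := S.asymm (i + 2) i
    have b3 := S.asymm (i + 3) i
    have b4 := S.asymm (i + 4) i
    have b5 := S.asymm (i + 2) (i + 1)
    have b6 := S.asymm (i + 3) (i + 1)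
    have b7 := S.asymm (i + 4) (i + 1)
    have b8 := S.asymm (i + 3) (i + 2)
    have b9 := S.asymm (i + 4) (i + 2)
    have b10 := S.asymm (i + 4) (i + 3)
    refine ⟨by omega, by omega, by omega, by omega, by omega, by omega, by omega, ?_, ?_, ?_, ?_,
      ?_, ?_, ?_, ?_, ?_, ?_, ?_, ?_, ?_, ?_⟩
    · have := S.dia i (i + 1) (i + 2) (i + 4) (by omega) (by omega) (by omega); omega
    · have := S.dia i (i + 1) (i + 3) (i + 4) (by omega) (by omega) (by omega); omega
    · have := S.dia i (i + 2) (i + 3) (i + 4) (by omega) (by omega) (by omega); omega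
    · have := S.dia (i + 1) (i + 2) (i + 3) (i + 4) (by omega) (by omega) (by omega); omega
    · have := S.k23 i (i + 1) (i + 2) (i + 3) (i + 4) (by omega) (by omega) (by omega) (by omega)
      omega
    · have := S.k23 i (i + 2) (i + 1) (i + 3) (i + 4) (by omega) (by omega) (by omega) (by omega)
      omega
    · have := S.k23 i (i + 3) (i + 1) (i + 2) (i + 4) (by omega) (by omega) (by omega) (by omega)
      omega
    · have := S.k23 i (i + 4) (i + 1) (i + 2) (i + 3) (by omega) (by omega) (by omega) (by omega)
      omega
    · have := S.k23 (i + 1) (i + 2) i (i + 3) (i + 4) (by omega) (by omega) (by omega) (by omega)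
      omega
    · have := S.k23 (i + 1) (i + 3) i (i + 2) (i + 4) (by omega) (by omega) (by omega) (by omega)
      omega
    · have := S.k23 (i + 1) (i + 4) i (i + 2) (i + 3) (by omega) (by omega) (by omega) (by omega)
      omega
    · have := S.k23 (i + 2) (i + 3) i (i + 1) (i + 4) (by omega) (by omega) (by omega) (by omega)
      omega
    · have := S.k23 (i + 2) (i + 4) i (i + 1) (i + 3) (by omega) (by omega) (by omega) (by omega)
      omega
    · have := S.k23 (i + 3) (i + 4) i (i + 1) (i + 2) (by omega) (by omega) (by omega) (by omega)
      omega
  have hnext := checkSt_step s hck _ _ _ _ (S.lt2 _ _) (S.lt2 _ _) (S.lt2 _ _) (S.lt2 _ _) hval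
  have B0 : ∃ b, b = s.g0 (A i (i + 4)) (A (i + 1) (i + 4)) (A (i + 2) (i + 4)) (A (i + 3) (i + 4)) := ⟨_, rfl⟩
  obtain ⟨b0, hb0⟩ := B0
  have B1 : ∃ b, b = s.g1 (A i (i + 4)) (A (i + 1) (i + 4)) (A (i + 2) (i + 4)) (A (i + 3) (i + 4)) := ⟨_, rfl⟩
  obtain ⟨b1, hb1⟩ := B1
  have B2 : ∃ b, b = s.g2 (A i (i + 4)) (A (i + 1) (i + 4)) (A (i + 2) (i + 4)) (A (i + 3) (i + 4)) := ⟨_, rfl⟩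
  obtain ⟨b2, hb2⟩ := B2
  refine ⟨bit b0, bit b1, bit b2, bit_lt _, bit_lt _, bit_lt _, ?_, ?_, ?_, ?_⟩
  rotate_left
  · intro hb
    have hb := bit_one hb
    simp only [hb0, hs, St.g0, stAt, Bool.and_eq_true, Bool.or_eq_true, Nat.beq_eq] at hb
    rcases hb with (⟨hf, hb | hb⟩ | ⟨hf, hb⟩) | ⟨hf, hb⟩
    · exact comb001 S i (t0 hf) hb
    · exact comb030 S i (t0 hf) hb
    · exact comb113 S i (t1 hf) hb
    · exact comb213 S i (t2 hf) hb
  · intro hb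
    have hb := bit_one hb
    simp only [hb1, hs, St.g1, stAt, Bool.and_eq_true, Bool.or_eq_true, Nat.beq_eq] at hb
    rcases hb with (⟨hf, hb⟩ | ⟨hf, hb⟩) | ⟨hf, hb | hb⟩
    · exact comb023 S i (t0 hf) hb
    · exact comb132 S i (t1 hf) hb
    · exact comb202 S i (t2 hf) hb
    · exact comb230 S i (t2 hf) hb
  · intro hb
    have hb := bit_one hb
    simp only [hb2, hs, St.g2, stAt, Bool.and_eq_true, Bool.or_eq_true, Nat.beq_eq] at hb
    rcases hb with (⟨hf, hb⟩ | ⟨hf, hb | hb⟩) | ⟨hf, hb⟩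
    · exact comb012 S i (t0 hf) hb
    · exact comb101 S i (t1 hf) hb
    · exact comb120 S i (t1 hf) hb
    · exact comb221 S i (t2 hf) hb
  · convert hnext using 2
    simp only [hb0, hb1, hb2, hs, stAt, St.next, Nat.add_assoc, Nat.reduceAdd, St.mk.injEq, true_and,
      and_true]
    refine ⟨by omega, by omega, by omega, by omega⟩

theorem init_good (adj : ℕ → ℕ → Prop) (hsym : ∀ u v, adj u v → adj v u) (hirr : ∀ u, ¬ adj u u)
    (p : ℕ → ℝ) (a b c d : ℕ) (hinj : ∀ u v, u < 4 → v < 4 → p u = p v → u = v)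
    (hs : sepv (p a) (p c) (p b) (p d) < 0)
    (hall : ∀ k, k < 4 → k = a ∨ k = b ∨ k = c ∨ k = d) (hno : ¬ (adj a c ∧ adj b d)) :
    GoodUpTo adj p 4 := by
  refine ⟨hinj, ?_⟩
  intro i u v w z _ _ _ _ _ _ _ _ hu hv hw hz huw huz hvw hvz huv hwz
  exact quad_ok adj hsym p a b c d hs hno u v w z (hall u hu) (hall v hv) (hall w hw) (hall z hz)
    (by rintro rfl; exact hirr _ huv) huw huz hvw hvz (by rintro rfl; exact hirr _ hwz) huv hwz

/-- Position of the vertices `0, 1, 2, 3` at prescribed places. -/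
def pos4 (a b c d : ℝ) : ℕ → ℝ
  | 0 => a
  | 1 => b
  | 2 => c
  | _ => d

theorem Story.start {n : ℕ} {adj : ℕ → ℕ → Prop} {A R : ℕ → ℕ → ℕ} (S : Story n adj A R) :
    Inv adj A R 0 := by
  have l1 := S.lt2 0 1
  have l2 := S.lt2 0 2
  have l3 := S.lt2 0 3
  have l4 := S.lt2 1 2
  have l5 := S.lt2 1 3
  have l6 := S.lt2 2 3
  have hd := S.dia 0 1 2 3 (by omega) (by omega) (by omega)
  have d0 := S.d0
  have d1 := S.d1
  have d2 := S.d2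
  have d3 := S.d3
  have hall : ∀ k, k < 4 → k = 0 ∨ k = 1 ∨ k = 2 ∨ k = 3 := by omega
  refine ⟨1 - A 0 2 * A 1 3, 1 - A 0 3 * A 1 2, 1 - A 0 1 * A 2 3, by omega, by omega, by omega,
    ?_, ?_, ?_, ?_⟩
  · convert init_ok (A 0 1) (A 0 2) (A 0 3) (A 1 2) (A 1 3) (A 2 3) l1 l2 l3 l4 l5 l6 (by omega)
      using 2
    simp only [stAt, initSt, Nat.zero_add, St.mk.injEq, true_and, and_true]
    refine ⟨by omega, by omega, by omega, by omega⟩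
  · intro hf
    have hs : sepv (pos4 0 1 2 3 0) (pos4 0 1 2 3 2) (pos4 0 1 2 3 1) (pos4 0 1 2 3 3) < 0 := by
      norm_num [sepv, pos4]
    refine ⟨pos4 0 1 2 3, init_good adj S.symm S.irr _ 0 1 2 3 ?_ hs (by omega) ?_, hs⟩
    · intro u v hu hv h
      rcases hall u hu with rfl | rfl | rfl | rfl <;> rcases hall v hv with rfl | rfl | rfl | rfl <;>
        first
        | rfl
        | (norm_num [pos4] at h)
    · rintro ⟨h1, h2⟩
      rw [S.one _ _ h1, S.one _ _ h2] at hf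
      omega
  · intro hf
    have hs : sepv (pos4 0 1 3 2 0) (pos4 0 1 3 2 3) (pos4 0 1 3 2 1) (pos4 0 1 3 2 2) < 0 := by
      norm_num [sepv, pos4]
    refine ⟨pos4 0 1 3 2, init_good adj S.symm S.irr _ 0 1 3 2 ?_ hs (by omega) ?_, hs⟩
    · intro u v hu hv h
      rcases hall u hu with rfl | rfl | rfl | rfl <;> rcases hall v hv with rfl | rfl | rfl | rfl <;>
        first
        | rfl
        | (norm_num [pos4] at h)
    · rintro ⟨h1, h2⟩
      rw [S.one _ _ h1, S.one _ _ h2] at hf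
      omega
  · intro hf
    have hs : sepv (pos4 0 2 1 3 0) (pos4 0 2 1 3 1) (pos4 0 2 1 3 2) (pos4 0 2 1 3 3) < 0 := by
      norm_num [sepv, pos4]
    refine ⟨pos4 0 2 1 3, init_good adj S.symm S.irr _ 0 2 1 3 ?_ hs (by omega) ?_, hs⟩
    · intro u v hu hv h
      rcases hall u hu with rfl | rfl | rfl | rfl <;> rcases hall v hv with rfl | rfl | rfl | rfl <;>
        first
        | rfl
        | (norm_num [pos4] at h)
    · rintro ⟨h1, h2⟩
      rw [S.one _ _ h1, S.one _ _ h2] at hf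
      omega

theorem Story.exists_pos {n : ℕ} {adj : ℕ → ℕ → Prop} {A R : ℕ → ℕ → ℕ} (S : Story n adj A R) :
    ∃ p : ℕ → ℝ, GoodUpTo adj p n := by
  have key : ∀ i, i + 4 ≤ n → Inv adj A R i := by
    intro i
    induction i with
    | zero => exact fun _ => S.start
    | succ i ih => exact fun h => S.step i (by omega) (ih (by omega))
  have hn := S.hn
  obtain ⟨f0, f1, f2, h0, h1, h2, hT, t0, t1, t2⟩ := key (n - 4) (by omega)
  have hck := checkSt_some _ (S.check _ f0 f1 f2 h0 h1 h2 hT)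
  have he : n - 4 + 4 = n := by omega
  rcases hck with h | h | h
  · obtain ⟨p, hp, _⟩ := t0 h
    exact ⟨p, he ▸ hp⟩
  · obtain ⟨p, hp, _⟩ := t1 h
    exact ⟨p, he ▸ hp⟩
  · obtain ⟨p, hp, _⟩ := t2 h
    exact ⟨p, he ▸ hp⟩

/-! ### From the graph to the combinatorial data -/

def adjN {n : ℕ} (G : SimpleGraph (Fin n)) (u v : ℕ) : Prop :=
  ∃ (hu : u < n) (hv : v < n), G.Adj ⟨u, hu⟩ ⟨v, hv⟩

open Classical in
noncomputable def adjV {n : ℕ} (G : SimpleGraph (Fin n)) (u v : ℕ) : ℕ :=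
  if adjN G u v then 1 else 0

noncomputable def resN {n : ℕ} (G : SimpleGraph (Fin n)) (u k : ℕ) : ℕ :=
  ∑ w ∈ Finset.Ico k n, adjV G u w

theorem adjV_le {n : ℕ} (G : SimpleGraph (Fin n)) (u v : ℕ) : adjV G u v ≤ 1 := by
  unfold adjV; split_ifs <;> omega

theorem adjV_ne {n : ℕ} {G : SimpleGraph (Fin n)} {u v : ℕ} (h : adjV G u v ≠ 0) :
    adjN G u v := by
  by_contra h'
  exact h (by simp [adjV, h'])

theorem adjN_symm {n : ℕ} {G : SimpleGraph (Fin n)} {u v : ℕ} (h : adjN G u v) : adjN G v u := by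
  obtain ⟨a, b, h⟩ := h
  exact ⟨b, a, h.symm⟩

theorem adjV_symm {n : ℕ} (G : SimpleGraph (Fin n)) (u v : ℕ) : adjV G u v = adjV G v u := by
  unfold adjV
  rw [show adjN G u v ↔ adjN G v u from ⟨adjN_symm, adjN_symm⟩]

theorem adjV_self {n : ℕ} (G : SimpleGraph (Fin n)) (u : ℕ) : adjV G u u = 0 := by
  by_contra h
  obtain ⟨_, _, h⟩ := adjV_ne h
  exact G.irrefl h

theorem adjV_far {n : ℕ} {G : SimpleGraph (Fin n)} (hv : Visible n 5 G) (u v : ℕ)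
    (h : u + 5 ≤ v ∨ v + 5 ≤ u) : adjV G u v = 0 := by
  by_contra h'
  obtain ⟨_, _, h'⟩ := adjV_ne h'
  have := hv _ _ h'
  simp only at this
  omega

theorem resN_zero {n : ℕ} {G : SimpleGraph (Fin n)} (hc : Cubic n G) (u : ℕ) (hu : u < n) :
    resN G u 0 = 3 := by
  classical
  have h3 := hc ⟨u, hu⟩
  rw [← h3, resN, ← Finset.range_eq_Ico, Finset.sum_range]
  rw [Set.ncard_eq_toFinset_card', ]
  simp only [adjV]
  rw [Finset.sum_boole]
  simp only [Nat.cast_id]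
  congr 1
  ext w
  simp [adjN, hu]

theorem resN_rec {n : ℕ} (G : SimpleGraph (Fin n)) (u k : ℕ) (hk : k < n) :
    resN G u k = adjV G u k + resN G u (k + 1) := by
  unfold resN
  rw [Finset.sum_eq_sum_Ico_succ_bot hk]

theorem resN_far {n : ℕ} {G : SimpleGraph (Fin n)} (hv : Visible n 5 G) (u k : ℕ)
    (h : u + 5 ≤ k) : resN G u k = 0 := by
  apply Finset.sum_eq_zero
  intro w hw
  rw [Finset.mem_Ico] at hw
  exact adjV_far hv _ _ (by omega)

theorem resN_anti {n : ℕ} (G : SimpleGraph (Fin n)) (u k : ℕ) : resN G u k ≤ resN G u 0 := by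
  apply Finset.sum_le_sum_of_subset
  exact Finset.Ico_subset_Ico_left (Nat.zero_le _)

theorem resN_le3 {n : ℕ} {G : SimpleGraph (Fin n)} (hc : Cubic n G) (u k : ℕ) :
    resN G u k ≤ 3 := by
  by_cases hu : u < n
  · exact (resN_anti G u k).trans (resN_zero hc u hu).le
  · have : resN G u k = 0 := by
      apply Finset.sum_eq_zero
      intro w _
      by_contra h'
      obtain ⟨h, _⟩ := adjV_ne h'
      exact hu h
    omega

theorem resN_ge {n : ℕ} {G : SimpleGraph (Fin n)} (hv : Visible n 5 G) (u k : ℕ)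
    (h : k + 4 ≤ u) (hk : k ≤ n) : resN G u 0 = resN G u k := by
  induction k with
  | zero => rfl
  | succ k ih =>
    rw [ih (by omega) (by omega), resN_rec G u k (by omega), adjV_far hv u k (by omega)]
    omega

theorem resN_pos {n : ℕ} {G : SimpleGraph (Fin n)} (u k w : ℕ) (hw : k ≤ w) (h : adjN G u w) :
    1 ≤ resN G u k := by
  have h1 : adjV G u w = 1 := by simp [adjV, h]
  rw [← h1]
  apply Finset.single_le_sum (f := fun w => adjV G u w) (fun _ _ => Nat.zero_le _)
  rw [Finset.mem_Ico]
  exact ⟨hw, h.2.1⟩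

theorem cut_ge {n : ℕ} {G : SimpleGraph (Fin n)} (h3 : ThreeConnected n G)
    (hv : Visible n 5 G) (i : ℕ) (hi : i + 4 < n) :
    3 ≤ resN G i (i + 4) + resN G (i + 1) (i + 4) + resN G (i + 2) (i + 4) +
      resN G (i + 3) (i + 4) := by
  by_contra hlt
  push Not at hlt
  -- left endpoints of the edges crossing the cut
  have hsum : ∑ j ∈ Finset.range 4, resN G (i + j) (i + 4) ≤ 2 := by
    simp only [Finset.sum_range_succ, Finset.sum_range_zero, Nat.add_zero, Nat.zero_add]
    omega
  set J : Finset ℕ := (Finset.range 4).filter (fun j => resN G (i + j) (i + 4) ≠ 0) with hJ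
  have hJ2 : J.card ≤ 2 := by
    calc J.card = ∑ j ∈ J, 1 := by simp
      _ ≤ ∑ j ∈ J, resN G (i + j) (i + 4) := by
          apply Finset.sum_le_sum
          intro j hj
          rw [hJ, Finset.mem_filter] at hj
          omega
      _ ≤ ∑ j ∈ Finset.range 4, resN G (i + j) (i + 4) :=
          Finset.sum_le_sum_of_subset (Finset.filter_subset _ _)
      _ ≤ 2 := hsum
  set s : Finset (Fin n) := Finset.univ.filter (fun v => v.val < i + 4 ∧ resN G v.val (i + 4) ≠ 0)
    with hs
  have hs2 : s.card ≤ 2 := by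
    refine le_trans ?_ hJ2
    apply Finset.card_le_card_of_injOn (fun v => v.val - i)
    · intro v hv'
      simp only [hs, Finset.coe_filter, Finset.mem_univ, true_and, mem_ofPred_eq] at hv'
      have hge : i ≤ v.val := by
        by_contra hlt'
        exact hv'.2 (resN_far hv _ _ (by omega))
      simp only [hJ, Finset.coe_filter, Finset.mem_range, mem_ofPred_eq]
      rw [show i + (v.val - i) = v.val by omega]
      exact ⟨by omega, hv'.2⟩
    · intro v hv' w hw' he
      simp only [hs, Finset.coe_filter, Finset.mem_univ, true_and, mem_ofPred_eq] at hv' hw'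
      have hge : i ≤ v.val := by
        by_contra hlt'
        exact hv'.2 (resN_far hv _ _ (by omega))
      have hge' : i ≤ w.val := by
        by_contra hlt'
        exact hw'.2 (resN_far hv _ _ (by omega))
      apply Fin.ext
      simp only at he
      omega
  -- a vertex on the left which is not removed
  obtain ⟨w, hw, hws⟩ : ∃ w : Fin n, w.val < i + 4 ∧ w ∉ s := by
    by_contra hno
    push Not at hno
    have hsub : (Finset.univ.filter (fun v : Fin n => v.val < 3)) ⊆ s := by
      intro v hv'
      simp only [Finset.mem_filter, Finset.mem_univ, true_and] at hv'
      exact hno v (by omega)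
    have hcard : 3 ≤ (Finset.univ.filter (fun v : Fin n => v.val < 3)).card := by
      have : ({⟨0, by omega⟩, ⟨1, by omega⟩, ⟨2, by omega⟩} : Finset (Fin n)) ⊆
          (Finset.univ.filter (fun v : Fin n => v.val < 3)) := by
        intro v hv'
        simp only [Finset.mem_insert, Finset.mem_singleton] at hv'
        simp only [Finset.mem_filter, Finset.mem_univ, true_and]
        rcases hv' with rfl | rfl | rfl <;> simp
      refine le_trans ?_ (Finset.card_le_card this)
      rw [Finset.card_eq_three.2 ⟨_, _, _, by simp, by simp, by simp, rfl⟩]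
    have := Finset.card_le_card hsub
    omega
  have := closed_all h3 s hs2 {v | v.val < i + 4} w hw hws (by
    intro u hu hus v huv _
    by_contra hvv
    simp only [mem_ofPred_eq, not_lt] at hu hvv
    apply hus
    simp only [hs, Finset.mem_filter, Finset.mem_univ, true_and]
    refine ⟨hu, ?_⟩
    have := resN_pos u.val (i + 4) v.val hvv ⟨u.2, v.2, huv⟩
    omega) ⟨i + 4, hi⟩ (by
      simp [hs])
  simp at this

theorem dia_le {n : ℕ} {G : SimpleGraph (Fin n)} (hn : 6 ≤ n) (h3 : ThreeConnected n G)
    (hc : Cubic n G) (w x y z : ℕ) (hwx : w ≠ x) (hwy : w ≠ y) (hwz : w ≠ z) (hxy : x ≠ y)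
    (hxz : x ≠ z) (hyz : y ≠ z) :
    adjV G w x + adjV G w y + adjV G w z + adjV G x y + adjV G x z + adjV G y z ≤ 4 := by
  have key : ∀ a b c d : ℕ, a ≠ b → adjN G a c → adjN G a d → adjN G b c → adjN G b d →
      adjN G c d → False := by
    rintro a b c d hab ⟨ha, hcc, h1⟩ ⟨_, hd, h2⟩ ⟨hb, _, k1⟩ ⟨_, _, k2⟩ ⟨_, _, k3⟩
    exact no_diamond hn h3 hc _ _ _ _ h1 h2 k1 k2 k3 (by simpa using hab)
  by_contra hlt
  have l1 := adjV_le G w x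
  have l2 := adjV_le G w y
  have l3 := adjV_le G w z
  have l4 := adjV_le G x y
  have l5 := adjV_le G x z
  have l6 := adjV_le G y z
  have hh : ∀ a b, adjV G a b ≠ 0 → adjN G a b := fun a b h => adjV_ne h
  have hh' : ∀ a b, adjV G a b ≠ 0 → adjN G b a := fun a b h => adjN_symm (adjV_ne h)
  by_cases e1 : adjV G w x = 0
  · exact key w x y z hwx (hh _ _ (by omega)) (hh _ _ (by omega)) (hh _ _ (by omega))
      (hh _ _ (by omega)) (hh _ _ (by omega))
  by_cases e2 : adjV G w y = 0
  · exact key w y x z hwy (hh _ _ (by omega)) (hh _ _ (by omega)) (hh' _ _ (by omega))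
      (hh _ _ (by omega)) (hh _ _ (by omega))
  by_cases e3 : adjV G w z = 0
  · exact key w z x y hwz (hh _ _ (by omega)) (hh _ _ (by omega)) (hh' _ _ (by omega))
      (hh' _ _ (by omega)) (hh _ _ (by omega))
  by_cases e4 : adjV G x y = 0
  · exact key x y w z hxy (hh' _ _ (by omega)) (hh _ _ (by omega)) (hh' _ _ (by omega))
      (hh _ _ (by omega)) (hh _ _ (by omega))
  by_cases e5 : adjV G x z = 0
  · exact key x z w y hxz (hh' _ _ (by omega)) (hh _ _ (by omega)) (hh' _ _ (by omega))
      (hh' _ _ (by omega)) (hh _ _ (by omega))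
  · exact key y z w x hyz (hh' _ _ (by omega)) (hh' _ _ (by omega)) (hh' _ _ (by omega))
      (hh' _ _ (by omega)) (hh _ _ (by omega))

theorem k23_le {n : ℕ} {G : SimpleGraph (Fin n)} (hn : 6 ≤ n) (hpl : PlanarGraph n G)
    (h3 : ThreeConnected n G) (hc : Cubic n G) (a b x y z : ℕ) (hab : a ≠ b) (hxy : x ≠ y)
    (hxz : x ≠ z) (hyz : y ≠ z) :
    adjV G a x + adjV G a y + adjV G a z + adjV G b x + adjV G b y + adjV G b z ≤ 5 := by
  by_contra hlt
  have l1 := adjV_le G a x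
  have l2 := adjV_le G a y
  have l3 := adjV_le G a z
  have l4 := adjV_le G b x
  have l5 := adjV_le G b y
  have l6 := adjV_le G b z
  obtain ⟨ha, hx, k1⟩ := adjV_ne (G := G) (u := a) (v := x) (by omega)
  obtain ⟨_, hy, k2⟩ := adjV_ne (G := G) (u := a) (v := y) (by omega)
  obtain ⟨_, hz, k3⟩ := adjV_ne (G := G) (u := a) (v := z) (by omega)
  obtain ⟨hb, _, k4⟩ := adjV_ne (G := G) (u := b) (v := x) (by omega)
  obtain ⟨_, _, k5⟩ := adjV_ne (G := G) (u := b) (v := y) (by omega)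
  obtain ⟨_, _, k6⟩ := adjV_ne (G := G) (u := b) (v := z) (by omega)
  exact no_K23 hn hpl h3 hc ⟨a, ha⟩ ⟨b, hb⟩ ⟨x, hx⟩ ⟨y, hy⟩ ⟨z, hz⟩ (by simpa using hab)
    (by simpa using hxy) (by simpa using hxz) (by simpa using hyz) k1 k2 k3 k4 k5 k6

theorem story_of {n : ℕ} {G : SimpleGraph (Fin n)} (hn : 6 ≤ n) (hpl : PlanarGraph n G)
    (h3 : ThreeConnected n G) (hc : Cubic n G) (hv : Visible n 5 G) :
    Story n (adjN G) (adjV G) (resN G) := by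
  have first4 : ∀ u, u < 4 →
      adjV G u 0 + adjV G u 1 + adjV G u 2 + adjV G u 3 + resN G u 4 = 3 := by
    intro u hu
    have e := resN_zero hc u (by omega)
    rw [resN_rec G u 0 (by omega), resN_rec G u 1 (by omega), resN_rec G u 2 (by omega),
      resN_rec G u 3 (by omega)] at e
    simp only [Nat.reduceAdd, Nat.zero_add] at e
    omega
  refine
    { hn := by omega
      symm := fun _ _ h => adjN_symm h
      irr := ?_
      lt2 := fun u v => Nat.lt_succ_of_le (adjV_le G u v)
      one := fun u v h => by simp [adjV, h]
      asymm := adjV_symm G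
      rec_eq := resN_rec G
      le3 := resN_le3 hc
      far := fun i => resN_far hv _ _ le_rfl
      fin := fun u => by simp [resN]
      deg := ?_
      d0 := ?_
      d1 := ?_
      d2 := ?_
      d3 := ?_
      cut := cut_ge h3 hv
      dia := fun w x y z h1 h2 h4 => dia_le hn h3 hc w x y z (by omega) (by omega) (by omega)
        (by omega) (by omega) (by omega)
      k23 := k23_le hn hpl h3 hc }
  · rintro u ⟨_, _, h⟩
    exact G.irrefl h
  · intro i hi
    have e := resN_zero hc (i + 4) hi
    rw [resN_ge hv (i + 4) i le_rfl (by omega), resN_rec G _ i (by omega),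
      resN_rec G _ (i + 1) (by omega), resN_rec G _ (i + 1 + 1) (by omega),
      resN_rec G _ (i + 1 + 1 + 1) (by omega), resN_rec G _ (i + 1 + 1 + 1 + 1) (by omega)] at e
    simp only [Nat.add_assoc, Nat.reduceAdd, adjV_self] at e
    rw [adjV_symm G i, adjV_symm G (i + 1), adjV_symm G (i + 2), adjV_symm G (i + 3)]
    omega
  · have := first4 0 (by omega)
    have := adjV_self G 0
    omega
  · have := first4 1 (by omega)
    have := adjV_self G 1
    have := adjV_symm G 1 0
    omega
  · have := first4 2 (by omega)
    have := adjV_self G 2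
    have := adjV_symm G 2 0
    have := adjV_symm G 2 1
    omega
  · have := first4 3 (by omega)
    have := adjV_self G 3
    have := adjV_symm G 3 0
    have := adjV_symm G 3 1
    have := adjV_symm G 3 2
    omega


/-- **Lemma 6 in the appendix.** Every `n`-vertex planar
triconnected cubic graph `G` with `n ≥ 6`, equipped with a vertex ordering with
viewing window `ω = 5` making all edges visible, admits a good embedding. -/
theorem exists_good_embedding
    (n : ℕ) (G : SimpleGraph (Fin n)) (hn : 6 ≤ n)
    (hplanar : PlanarGraph n G) (h3 : ThreeConnected n G) (hcubic : Cubic n G)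
    (hvis : Visible n 5 G) :
    ∃ D : RawDrawing n, GoodEmbedding n 5 G D := by
  obtain ⟨p, hinj, hgood⟩ := (story_of hn hplanar h3 hcubic hvis).exists_pos
  refine good_of_pos n 5 G (fun v => p v.val) ?_ ?_
  · intro u v h
    exact Fin.ext (hinj u.val v.val u.2 v.2 h)
  · rintro u v x y huv hxy h1 h2 h4 h5 ⟨i, _, _, hu, hv, hx, hy⟩
    simp only [window, mem_ofPred_eq] at hu hv hx hy
    exact hgood (i - 5) u v x y (by omega) (by omega) (by omega) (by omega) (by omega) (by omega)
      (by omega) (by omega) u.2 v.2 x.2 y.2 (fun h => h1 (Fin.ext h)) (fun h => h2 (Fin.ext h))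
      (fun h => h4 (Fin.ext h)) (fun h => h5 (Fin.ext h)) ⟨u.2, v.2, huv⟩ ⟨x.2, y.2, hxy⟩

end GraphStories
end

section
/- Let G be an n-vertex planar triconnected cubic graph with n ≥ 6, equipped with a vertex ordering τ with viewing window ω = 5 such that every edge (v_i, v_j) satisfies |i − j| < 5. There exists an embedding φ' of G (crossings interpreted as dummy vertices) satisfying: (i) the external cycle of φ' is not a critical cycle; and (ii) any two crossing edges of φ' are not coeval, and one of them is an edge incident to v_1. -/
open Set

namespace GraphStories

/-- The edge `u w` lies on a triangle or a quadrilateral contained in a window. -/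
def Cov (n : ℕ) (G : SimpleGraph (Fin n)) (u w : Fin n) : Prop :=
  ∃ i, (∃ x ∈ window n 5 i, u ∈ window n 5 i ∧ w ∈ window n 5 i ∧ G.Adj u x ∧ G.Adj x w) ∨
    (∃ x ∈ window n 5 i, ∃ y ∈ window n 5 i, u ∈ window n 5 i ∧ w ∈ window n 5 i ∧
      G.Adj u x ∧ G.Adj x y ∧ G.Adj y w ∧ x ≠ w ∧ y ≠ u)

theorem cov_of_cycle (n : ℕ) (G : SimpleGraph (Fin n)) (r : Fin n) (c : G.Walk r r)
    (hc : c.IsCycle) (v : Fin n) (hco : CoevalWithCycle n 5 c v) (hv : v ∉ c.support)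
    (u w : Fin n) (he : s(u, w) ∈ c.edges) : Cov n G u w := by
  obtain ⟨i, hi1, -, hvi, hsup⟩ := hco
  have hlen : c.length ≤ 4 := by
    have hnd := hc.support_nodup
    have h1 : c.support.tail.length = c.length := by simp
    have h2 : c.support.tail.toFinset.card = c.length := by
      rw [List.toFinset_card_of_nodup hnd, h1]
    have h3 : v ∉ c.support.tail.toFinset := by
      intro h
      exact hv (List.mem_of_mem_tail (List.mem_toFinset.1 h))
    have h4 : ((insert v c.support.tail.toFinset).image Fin.val) ⊆ Finset.Icc (i - 5) (i - 1) := by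
      intro a ha
      simp only [Finset.mem_image, Finset.mem_insert, List.mem_toFinset] at ha
      obtain ⟨b, hb, rfl⟩ := ha
      have : b ∈ window n 5 i := by
        rcases hb with rfl | hb
        · exact hvi
        · exact hsup b (List.mem_of_mem_tail hb)
      simp only [window, mem_ofPred_eq] at this
      simp only [Finset.mem_Icc]
      omega
    have h5 := Finset.card_le_card h4
    rw [Finset.card_image_of_injective _ Fin.val_injective, Finset.card_insert_of_notMem h3, h2,
      Nat.card_Icc] at h5
    omega
  refine ⟨i, ?_⟩
  have h3 := hc.three_le_length
  have hn1 := hc.support_nodup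
  cases c with
  | nil => simp at h3
  | cons h1 c =>
    cases c with
    | nil => simp at h3
    | cons h2 c =>
      cases c with
      | nil => simp at h3
      | cons h4 c =>
        cases c with
        | nil =>
          simp only [SimpleGraph.Walk.support_cons, SimpleGraph.Walk.support_nil,
            List.mem_cons, List.not_mem_nil, or_false, SimpleGraph.Walk.edges_cons,
            SimpleGraph.Walk.edges_nil, Sym2.eq_iff, forall_eq_or_imp, forall_eq] at hsup he
          left
          have := h1.symm
          have := h2.symm
          have := h4.symm
          rcases he with (⟨rfl, rfl⟩ | ⟨rfl, rfl⟩) | (⟨rfl, rfl⟩ | ⟨rfl, rfl⟩) |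
            (⟨rfl, rfl⟩ | ⟨rfl, rfl⟩) <;> grind
        | cons h5 c =>
          cases c with
          | nil =>
            simp only [SimpleGraph.Walk.support_cons, SimpleGraph.Walk.support_nil,
              List.mem_cons, List.not_mem_nil, or_false, SimpleGraph.Walk.edges_cons,
              SimpleGraph.Walk.edges_nil, Sym2.eq_iff, forall_eq_or_imp, forall_eq,
              List.tail_cons, List.nodup_cons, not_or] at hsup he hn1
            right
            have := h1.symm
            have := h2.symm
            have := h4.symm
            have := h5.symm
            rcases he with (⟨rfl, rfl⟩ | ⟨rfl, rfl⟩) | (⟨rfl, rfl⟩ | ⟨rfl, rfl⟩) |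
              (⟨rfl, rfl⟩ | ⟨rfl, rfl⟩) | (⟨rfl, rfl⟩ | ⟨rfl, rfl⟩) <;> grind
          | cons h6 c => simp at hlen; omega

/-- A set with a boundary of at most two vertices cannot be separated from the rest. -/
theorem no_sep (n : ℕ) (G : SimpleGraph (Fin n)) (h3 : ThreeConnected n G)
    (R : Finset (Fin n)) (hR : R.card ≤ 2) (T : Set (Fin n)) (t : Fin n) (htT : t ∈ T)
    (htR : t ∉ R) (hcl : ∀ a ∈ T, a ∉ R → ∀ b, G.Adj a b → b ∈ T ∨ b ∈ R)
    (o : Fin n) (hoT : o ∉ T) (hoR : o ∉ R) : False := by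
  have hconn := h3.2 R hR
  obtain ⟨p⟩ := hconn.preconnected ⟨t, htR⟩ ⟨o, hoR⟩
  have key : ∀ (a b : {v : Fin n | v ∉ R}), (SimpleGraph.induce {v : Fin n | v ∉ R} G).Walk a b →
      a.1 ∈ T → b.1 ∈ T := by
    intro a b p
    induction p with
    | nil => exact id
    | cons h p ih =>
      intro ha
      apply ih
      rename_i x y z
      rcases hcl x.1 ha x.2 y.1 h with h | h
      · exact h
      · exact absurd h y.2
  exact hoT (key _ _ p htT)

/-- The neighbourhood of a vertex with three known neighbours. -/
theorem nb_three (n : ℕ) (G : SimpleGraph (Fin n)) (hc : Cubic n G) (v x y z : Fin n)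
    (hxy : x ≠ y) (hxz : x ≠ z) (hyz : y ≠ z) (hx : G.Adj v x) (hy : G.Adj v y) (hz : G.Adj v z) :
    ∀ b, G.Adj v b → b = x ∨ b = y ∨ b = z := by
  intro b hb
  have h1 : ({x, y, z} : Set (Fin n)) ⊆ G.neighborSet v := by
    intro a ha
    rcases ha with rfl | rfl | rfl <;> assumption
  have h2 : ({x, y, z} : Set (Fin n)).ncard = 3 := Set.ncard_eq_three.2 ⟨x, y, z, hxy, hxz, hyz, rfl⟩
  have h3 := Set.eq_of_subset_of_ncard_le h1 (by rw [h2, hc v]) (Set.toFinite _)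
  have : b ∈ ({x, y, z} : Set (Fin n)) := by rw [h3]; exact hb
  simpa using this

theorem nb_exists (n : ℕ) (G : SimpleGraph (Fin n)) (hc : Cubic n G) (v : Fin n) :
    ∃ x y z, x ≠ y ∧ x ≠ z ∧ y ≠ z ∧ G.Adj v x ∧ G.Adj v y ∧ G.Adj v z := by
  obtain ⟨x, y, z, h1, h2, h3, h⟩ := Set.ncard_eq_three.1 (hc v)
  refine ⟨x, y, z, h1, h2, h3, ?_, ?_, ?_⟩ <;> rw [← SimpleGraph.mem_neighborSet, h] <;> simp

/-- A third neighbour distinct from two given vertices. -/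
theorem nb_third (n : ℕ) (G : SimpleGraph (Fin n)) (hc : Cubic n G) (v p q : Fin n) :
    ∃ x, G.Adj v x ∧ x ≠ p ∧ x ≠ q := by
  obtain ⟨x, y, z, h1, h2, h3, hx, hy, hz⟩ := nb_exists n G hc v
  by_contra! h
  grind

/-- Two adjacent vertices with the same two further neighbours. -/
theorem caseA (n : ℕ) (G : SimpleGraph (Fin n)) (hn : 5 ≤ n) (h3 : ThreeConnected n G)
    (hc : Cubic n G) (p q r s : Fin n) (hpq : G.Adj p q) (hpr : G.Adj p r) (hps : G.Adj p s)
    (hqr : G.Adj q r) (hqs : G.Adj q s) (hrs : r ≠ s) : False := by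
  have hp := nb_three n G hc p q r s hqr.ne hqs.ne hrs hpq hpr hps
  have hq := nb_three n G hc q p r s hpr.ne hps.ne hrs hpq.symm hqr hqs
  obtain ⟨o, ho⟩ : ∃ o, o ∉ ({p, q, r, s} : Finset (Fin n)) := by
    by_contra! h
    have h1 : (Finset.univ : Finset (Fin n)) ⊆ {p, q, r, s} := fun a _ => h a
    have := Finset.card_le_card h1
    have h4 : ({p, q, r, s} : Finset (Fin n)).card ≤ 4 := Finset.card_le_four
    simp at this
    omega
  have := hpr.ne
  have := hps.ne
  refine no_sep n G h3 {r, s} Finset.card_le_two {p, q} p (by simp) (by grind) ?_ o (by grind)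
    (by grind)
  grind

/-- Five consecutive vertices with three edges leaving them. -/
theorem caseB (n : ℕ) (G : SimpleGraph (Fin n)) (hn : 7 ≤ n) (h3 : ThreeConnected n G)
    (hc : Cubic n G) (a b c d e : Fin n) (hnd : [a, b, c, d, e].Nodup)
    (hab : ¬ G.Adj a b) (hac : ¬ G.Adj a c)
    (hd : ∀ x, G.Adj d x → x ∈ [a, b, c, d, e]) (he : ∀ x, G.Adj e x → x ∈ [a, b, c, d, e])
    (had : G.Adj a d) (hae : G.Adj a e)
    (hb : ∃ p q, p ≠ q ∧ p ∈ [a, b, c, d, e] ∧ q ∈ [a, b, c, d, e] ∧ G.Adj b p ∧ G.Adj b q)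
    (hcc : ∃ p q, p ≠ q ∧ p ∈ [a, b, c, d, e] ∧ q ∈ [a, b, c, d, e] ∧ G.Adj c p ∧ G.Adj c q)
    (hcov : ∀ u w, G.Adj u w → Cov n G u w) : False := by
  obtain ⟨a', haa, had', hae'⟩ := nb_third n G hc a d e
  have hde : d ≠ e := by grind
  have hna := nb_three n G hc a d e a' hde had'.symm hae'.symm had hae haa
  have ha'S : a' ∉ [a, b, c, d, e] := by
    have := haa.ne
    grind
  -- the outside neighbour of a is that of b or c
  have hor : G.Adj b a' ∨ G.Adj c a' := by
    obtain ⟨i, h | h⟩ := hcov a a' haa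
    · obtain ⟨x, -, -, -, hax, hxa⟩ := h
      have := hxa.ne
      rcases hna x hax with rfl | rfl | rfl
      · exact absurd (hd _ hxa) ha'S
      · exact absurd (he _ hxa) ha'S
      · exact absurd rfl this
    · obtain ⟨x, -, y, -, -, -, hax, hxy, hya, hne, hne2⟩ := h
      have hx : x = d ∨ x = e := by grind
      have hy : y ∈ [a, b, c, d, e] := by
        rcases hx with rfl | rfl
        · exact hd _ hxy
        · exact he _ hxy
      have h1 : y ≠ d := by
        rintro rfl
        exact ha'S (hd _ hya)
      have h2 : y ≠ e := by
        rintro rfl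
        exact ha'S (he _ hya)
      simp only [List.mem_cons, List.not_mem_nil, or_false] at hy
      grind
  obtain ⟨o, ho⟩ : ∃ o, o ∉ ({a, b, c, d, e, a'} : Finset (Fin n)) := by
    by_contra! h
    have h1 : (Finset.univ : Finset (Fin n)) ⊆ {a, b, c, d, e, a'} := fun a _ => h a
    have := Finset.card_le_card h1
    have h4 : ({a, b, c, d, e, a'} : Finset (Fin n)).card ≤ 6 := Finset.card_le_six
    simp at this
    omega
  rcases hor with hba | hca
  · obtain ⟨p, q, hpq, hp, hq, hbp, hbq⟩ := hb
    have hnb := nb_three n G hc b p q a' hpq (by grind) (by grind) hbp hbq hba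
    refine no_sep n G h3 {a', c} Finset.card_le_two {a, b, d, e} a (by simp) (by grind) ?_ o
      (by grind) (by grind)
    rintro x (rfl | rfl | rfl | rfl) - y hxy
    · grind
    · grind
    · grind
    · grind
  · obtain ⟨p, q, hpq, hp, hq, hbp, hbq⟩ := hcc
    have hnb := nb_three n G hc c p q a' hpq (by grind) (by grind) hbp hbq hca
    refine no_sep n G h3 {a', b} Finset.card_le_two {a, c, d, e} a (by simp) (by grind) ?_ o
      (by grind) (by grind)
    rintro x (rfl | rfl | rfl | rfl) - y hxy
    · grind
    · grind
    · grind
    · grind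

theorem exists_uncov (n : ℕ) (G : SimpleGraph (Fin n)) (hn : 7 ≤ n) (h3 : ThreeConnected n G)
    (hc : Cubic n G) (hvis : Visible n 5 G) : ∃ u w, G.Adj u w ∧ ¬ Cov n G u w := by
  by_contra! hcov
  obtain ⟨x, y, z, hxy, hxz, hyz, hx, hy, hz⟩ := nb_exists n G hc ⟨0, by omega⟩
  generalize h0 : (⟨0, by omega⟩ : Fin n) = o at *
  have ho : o.val = 0 := by rw [← h0]
  have hx5 := (hvis o x hx).2
  have hy5 := (hvis o y hy).2
  have hz5 := (hvis o z hz).2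
  have hx0 : x.val ≠ 0 := fun h => hx.ne (Fin.ext (by omega))
  have hy0 : y.val ≠ 0 := fun h => hy.ne (Fin.ext (by omega))
  have hz0 : z.val ≠ 0 := fun h => hz.ne (Fin.ext (by omega))
  have hxy' : x.val ≠ y.val := fun h => hxy (Fin.ext h)
  have hxz' : x.val ≠ z.val := fun h => hxz (Fin.ext h)
  have hyz' : y.val ≠ z.val := fun h => hyz (Fin.ext h)
  obtain ⟨w, hw⟩ : ∃ w : Fin n, w.val = 10 - x.val - y.val - z.val := ⟨⟨_, by omega⟩, rfl⟩
  have hS : ∀ a : Fin n, a.val < 5 → a = o ∨ a = x ∨ a = y ∨ a = z ∨ a = w := by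
    intro a ha
    simp only [Fin.ext_iff]
    omega
  have hwo : w ≠ o := fun h => by rw [Fin.ext_iff] at h; omega
  have hwx : w ≠ x := fun h => by rw [Fin.ext_iff] at h; omega
  have hwy : w ≠ y := fun h => by rw [Fin.ext_iff] at h; omega
  have hwz : w ≠ z := fun h => by rw [Fin.ext_iff] at h; omega
  have hno := nb_three n G hc o x y z hxy hxz hyz hx hy hz
  have hnow : ¬ G.Adj o w := fun h => by
    rcases hno w h with h | h | h <;> contradiction
  have hox := hx.ne
  have hoy := hy.ne
  have hoz := hz.ne
  clear h0 hx0 hy0 hz0 hxy' hxz' hyz'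
  have hcv : ∀ t, G.Adj o t → (∃ s, G.Adj o s ∧ G.Adj s t) ∨
      (G.Adj t w ∧ ∃ s, s ≠ t ∧ G.Adj o s ∧ G.Adj s w) := by
    intro t ht
    obtain ⟨i, h | h⟩ := hcov o t ht
    · obtain ⟨s, -, -, -, h1, h2⟩ := h
      exact Or.inl ⟨s, h1, h2⟩
    · obtain ⟨s, -, s', hs', ho', -, h1, h2, h4, h5, h6⟩ := h
      have : s'.val < 5 := by
        simp only [window, mem_ofPred_eq] at hs' ho'
        omega
      rcases hS s' this with h | h | h | h | h
      · exact absurd h h6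
      · subst h; exact Or.inl ⟨_, hx, h4⟩
      · subst h; exact Or.inl ⟨_, hy, h4⟩
      · subst h; exact Or.inl ⟨_, hz, h4⟩
      · subst h; exact Or.inr ⟨h4.symm, s, h5, h1, h2⟩
  clear hS hw hx5 hy5 hz5
  -- no two edges among the neighbours
  have hA : ∀ p q r, G.Adj o p → G.Adj o q → G.Adj o r → q ≠ r → G.Adj p q → G.Adj p r → False := by
    intro p q r hp hq hr hqr h1 h2
    exact caseA n G (by omega) h3 hc o p q r hp hq hr h1 h2 hqr
  -- one edge among the neighbours
  have hB1 : ∀ p q r, G.Adj o p → G.Adj o q → G.Adj o r → p ≠ q → p ≠ r → q ≠ r →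
      G.Adj p q → G.Adj r w → G.Adj q w → False := by
    intro p q r hp hq hr hpq hpr hqr h1 h2 h4
    have hpw : ¬ G.Adj p w := fun h5 => by
      exact caseA n G (by omega) h3 hc p q o w h1 hp.symm h5 hq.symm h4 hwo.symm
    have hnq := nb_three n G hc q o p w hp.ne hwo.symm (by grind) hq.symm h1.symm h4
    have hno' := nb_three n G hc o p q r hpq hpr hqr hp hq hr
    refine caseB n G hn h3 hc p r w o q ?_ ?_ ?_ ?_ ?_ hp.symm h1 ?_ ?_ hcov
    · have := hp.ne
      have := hq.ne
      have := hr.ne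
      have := h2.ne
      have := h4.ne
      grind
    · intro h
      exact hA p q r hp hq hr hqr h1 h
    · exact hpw
    · intro a ha
      grind
    · intro a ha
      grind
    · exact ⟨o, w, hwo.symm, by simp, by simp, hr.symm, h2⟩
    · exact ⟨r, q, hqr.symm, by simp, by simp, h2.symm, h4.symm⟩
  have hB : ∀ p q r, G.Adj o p → G.Adj o q → G.Adj o r → p ≠ q → p ≠ r → q ≠ r →
      G.Adj p q → False := by
    intro p q r hp hq hr hpq hpr hqr h1
    have hno' := nb_three n G hc o p q r hpq hpr hqr hp hq hr
    rcases hcv r hr with ⟨s, hs, hsr⟩ | ⟨hrw, s, hsr, hs, hsw⟩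
    · rcases hno' s hs with rfl | rfl | rfl
      · exact hA _ _ _ hp hq hr hqr h1 hsr
      · exact hA _ _ _ hq hp hr hpr h1.symm hsr
      · exact hsr.ne rfl
    · rcases hno' s hs with rfl | rfl | rfl
      · exact hB1 q s r hq hp hr hpq.symm hqr hpr h1.symm hrw hsw
      · exact hB1 p s r hp hq hr hpq hpr hqr h1 hrw hsw
      · exact hsr rfl
  have hxyA : ¬ G.Adj x y := hB x y z hx hy hz hxy hxz hyz
  have hxzA : ¬ G.Adj x z := hB x z y hx hz hy hxz hxy hyz.symm
  have hyzA : ¬ G.Adj y z := hB y z x hy hz hx hyz hxy.symm hxz.symm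
  have hW : ∀ t, G.Adj o t → G.Adj t w := by
    intro t ht
    rcases hcv t ht with ⟨s, hs, hst⟩ | h
    · exfalso
      have := hst.ne
      have := hst.symm
      grind
    · exact h.1
  have hnw := nb_three n G hc w x y z hxy hxz hyz (hW x hx).symm (hW y hy).symm (hW z hz).symm
  refine caseB n G hn h3 hc x y z o w ?_ hxyA hxzA ?_ ?_ hx.symm (hW x hx) ?_ ?_ hcov
  · grind
  · intro a ha
    grind
  · intro a ha
    grind
  · exact ⟨o, w, hwo.symm, by simp, by simp, hy.symm, hW y hy⟩
  · exact ⟨o, w, hwo.symm, by simp, by simp, hz.symm, hW z hz⟩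

/-- There is no continuous injection of the plane into the line. -/
theorem no_inj_plane (f : Pt → ℝ) (hf : Continuous f) (hinj : Function.Injective f) : False := by
  have hrank : 1 < Module.rank ℝ Pt := by
    rw [rank_prod', Module.rank_self]
    norm_num
  have key : ∀ a m b : Pt, f a < f m → f m < f b → False := by
    intro a m b h1 h2
    have hc : IsPreconnected (f '' {m}ᶜ) :=
      (isConnected_compl_singleton_of_one_lt_rank hrank m).isPreconnected.image f hf.continuousOn
    have ha : f a ∈ f '' {m}ᶜ := ⟨a, fun h => by simp at h; subst h; exact lt_irrefl _ h1, rfl⟩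
    have hb : f b ∈ f '' {m}ᶜ := ⟨b, fun h => by simp at h; subst h; exact lt_irrefl _ h2, rfl⟩
    obtain ⟨y, hy, hym⟩ := hc.ordConnected.out ha hb ⟨h1.le, h2.le⟩
    exact hy (hinj hym)
  have h1 : f (0, 0) ≠ f (1, 0) := fun h => by simpa using hinj h
  have h2 : f (0, 0) ≠ f (0, 1) := fun h => by simpa using hinj h
  have h3 : f (1, 0) ≠ f (0, 1) := fun h => by simpa using hinj h
  rcases lt_or_gt_of_ne h1 with h1 | h1 <;> rcases lt_or_gt_of_ne h2 with h2 | h2 <;>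
    rcases lt_or_gt_of_ne h3 with h3 | h3
  · exact key _ _ _ h1 h3
  · exact key _ _ _ h2 h3
  · exact lt_irrefl _ ((h1.trans h3).trans h2)
  · exact key _ _ _ h2 h1
  · exact key _ _ _ h1 h2
  · exact lt_irrefl _ ((h3.trans h1).trans h2)
  · exact key _ _ _ h3 h2
  · exact key _ _ _ h3 h1

/-- An arc does not contain a ball. -/
theorem arc_no_ball (γ : ℝ → Pt) (hc : ContinuousOn γ (Icc 0 1)) (hi : InjOn γ (Icc 0 1))
    (q : Pt) (r : ℝ) (hr : 0 < r) : ∃ p ∈ Metric.ball q r, p ∉ arcBody γ := by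
  by_contra! h
  let g : Icc (0 : ℝ) 1 → Pt := fun t => γ t.1
  have hgc : Continuous g := continuousOn_iff_continuous_domRestrict.1 hc
  have hgi : Function.Injective g := injOn_iff_injective.1 hi
  have hemb : Topology.IsClosedEmbedding g := hgc.isClosedEmbedding hgi
  let φ : Pt → Pt := OpenPartialHomeomorph.univBall q r
  have hφc : Continuous φ := OpenPartialHomeomorph.continuous_univBall q r
  have hφi : Function.Injective φ := by
    intro a b hab
    exact (OpenPartialHomeomorph.univBall q r).injOn (by simp) (by simp) hab
  have hφb : ∀ x, φ x ∈ range g := by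
    intro x
    have h1 : φ x ∈ Metric.ball q r := by
      have := (OpenPartialHomeomorph.univBall q r).map_source (x := x) (by simp)
      rwa [OpenPartialHomeomorph.univBall_target q hr] at this
    obtain ⟨t, ht, htx⟩ := h _ h1
    exact ⟨⟨t, ht⟩, htx⟩
  let H := hemb.isEmbedding.toHomeomorph
  refine no_inj_plane (fun x => (H.symm ⟨φ x, hφb x⟩ : Icc (0 : ℝ) 1).1) ?_ ?_
  · exact continuous_subtype_val.comp (H.symm.continuous.comp (hφc.subtype_mk _))
  · intro a b hab
    have h1 := H.symm.injective (Subtype.val_injective hab)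
    exact hφi (congrArg Subtype.val h1)

/-- The inversion centred at `p`. -/
noncomputable def inv (p x : Pt) : Pt := (‖x - p‖ ^ 2)⁻¹ • (x - p)

theorem inv_norm (p x : Pt) : ‖inv p x‖ = ‖x - p‖⁻¹ := by
  unfold inv
  rw [norm_smul, norm_inv, norm_pow, norm_norm]
  by_cases h : ‖x - p‖ = 0
  · simp [h]
  · field_simp

theorem inv_inj (p : Pt) : Function.Injective (inv p) := by
  have key : ∀ x, (‖inv p x‖ ^ 2)⁻¹ • inv p x = x - p := by
    intro x
    rw [inv_norm]
    unfold inv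
    by_cases h : ‖x - p‖ = 0
    · rw [norm_eq_zero] at h
      simp [h]
    · rw [smul_smul]
      have : ((‖x - p‖⁻¹ ^ 2)⁻¹ * (‖x - p‖ ^ 2)⁻¹) = 1 := by field_simp
      rw [this, one_smul]
  intro x y h
  have h1 := key x
  rw [h, key y] at h1
  exact (sub_left_inj.1 h1).symm

theorem inv_cont (p : Pt) : ContinuousOn (inv p) {p}ᶜ := by
  refine ContinuousOn.smul (f := fun x : Pt => (‖x - p‖ ^ 2)⁻¹) (g := fun x : Pt => x - p) ?_ ?_
  · apply ContinuousOn.inv₀ (by fun_prop)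
    intro x hx
    have : x - p ≠ 0 := sub_ne_zero.2 hx
    positivity
  · fun_prop

theorem bounded_contra (X S : Set Pt) (hS : IsPreconnected S) (a : Pt) (ha : a ∈ S)
    (hX : S ⊆ Xᶜ) (hb : ∀ M : ℝ, ∃ x ∈ S, M < ‖x‖) : a ∉ insideRegion X := by
  rintro ⟨-, h⟩
  obtain ⟨M, hM⟩ := (h.subset (hS.subset_connectedComponentIn ha hX)).exists_norm_le
  obtain ⟨x, hx, hxM⟩ := hb M
  exact absurd (hM x hx) (not_le.2 hxM)

theorem arcBody_subset (γ : ℝ → Pt) : arcBody γ ⊆ {γ 0, γ 1} ∪ arcInterior γ := by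
  rintro _ ⟨t, ht, rfl⟩
  rcases eq_or_lt_of_le ht.1 with h | h
  · left; left; rw [← h]
  · rcases eq_or_lt_of_le ht.2 with h' | h'
    · left; right; rw [h']; rfl
    · right; exact ⟨t, ⟨h, h'⟩, rfl⟩

theorem arcBody_symm (n : ℕ) (D : RawDrawing n)
    (hs : ∀ u v : Fin n, D.curve v u = fun t => D.curve u v (1 - t)) (u v : Fin n) :
    arcBody (D.curve v u) = arcBody (D.curve u v) := by
  rw [hs u v]
  ext p
  constructor
  · rintro ⟨t, ht, rfl⟩
    exact ⟨1 - t, ⟨by linarith [ht.2], by linarith [ht.1]⟩, rfl⟩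
  · rintro ⟨t, ht, rfl⟩
    exact ⟨1 - t, ⟨by linarith [ht.2], by linarith [ht.1]⟩, by simp⟩

/-- A planar drawing can be redrawn so that every external cycle uses a given edge. -/
theorem redraw (n : ℕ) (G : SimpleGraph (Fin n)) (D : RawDrawing n)
    (hD : IsPlanarDrawing n G univ D) (u w : Fin n) (huw : G.Adj u w) :
    ∃ D' : RawDrawing n, IsPlanarDrawing n G univ D' ∧
      ∀ (r : Fin n) (c : G.Walk r r), IsExternalCycle n G D' c → s(u, w) ∈ c.edges := by
  have hbody_compact : ∀ a b, G.Adj a b → IsCompact (arcBody (D.curve a b)) := fun a b hab =>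
    isCompact_Icc.image_of_continuousOn (hD.arc a (mem_univ _) b (mem_univ _) hab).1
  -- the rest of the drawing
  let K : Set Pt := range D.pos ∪
    ⋃ (e : Fin n × Fin n) (_ : G.Adj e.1 e.2 ∧ s(e.1, e.2) ≠ s(u, w)), arcBody (D.curve e.1 e.2)
  have hK : IsClosed K := by
    apply IsClosed.union (Set.finite_range _).isClosed
    apply isClosed_iUnion_of_finite
    intro e
    apply isClosed_iUnion_of_finite
    intro he
    exact (hbody_compact _ _ he.1).isClosed
  let q := D.curve u w (1 / 2)
  have hqi : q ∈ arcInterior (D.curve u w) := ⟨1 / 2, ⟨by norm_num, by norm_num⟩, rfl⟩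
  have hqpos : ∀ v, q ≠ D.pos v := by
    intro v h
    exact hD.vertex_off_arc u (mem_univ _) w (mem_univ _) huw v (mem_univ _) (h ▸ hqi)
  have hqK : q ∉ K := by
    rintro (⟨v, hv⟩ | h)
    · exact hqpos v hv.symm
    · simp only [mem_iUnion] at h
      obtain ⟨e, ⟨he, hne⟩, hq⟩ := h
      have harc := hD.arc e.1 (mem_univ _) e.2 (mem_univ _) he
      rcases arcBody_subset _ hq with (h | h) | h
      · exact hqpos e.1 (by rw [h, harc.2.2.1])
      · exact hqpos e.2 (by rw [h, harc.2.2.2])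
      · have := hD.no_cross u (mem_univ _) w (mem_univ _) e.1 (mem_univ _) e.2 (mem_univ _) huw he
          hne.symm
        exact this.le ⟨hqi, h⟩
  obtain ⟨ε, hε, hball⟩ := Metric.isOpen_iff.1 hK.isOpen_compl q hqK
  have harcuw := hD.arc u (mem_univ _) w (mem_univ _) huw
  obtain ⟨p, hpB, hpA⟩ := arc_no_ball _ harcuw.1 harcuw.2.1 q ε hε
  -- every edge arc meets the ball only if it is the edge `u w`
  have honly : ∀ x ∈ Metric.ball q ε, ∀ a b, G.Adj a b → x ∈ arcBody (D.curve a b) →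
      s(a, b) = s(u, w) := by
    intro x hx a b hab hxa
    by_contra hne
    refine hball hx (Or.inr ?_)
    simp only [mem_iUnion]
    exact ⟨(a, b), ⟨hab, hne⟩, hxa⟩
  have hsame : ∀ a b, s(a, b) = s(u, w) → arcBody (D.curve a b) = arcBody (D.curve u w) := by
    intro a b h
    rcases Sym2.eq_iff.1 h with ⟨rfl, rfl⟩ | ⟨rfl, rfl⟩
    · rfl
    · exact arcBody_symm n D hD.curve_symm _ _
  have hpE : ∀ a b, G.Adj a b → p ∉ arcBody (D.curve a b) := by
    intro a b hab h
    have := honly p hpB a b hab h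
    rw [hsame a b this] at h
    exact hpA h
  let D' : RawDrawing n := ⟨fun v => inv p (D.pos v), fun a b t => inv p (D.curve a b t)⟩
  have hint : ∀ a b, arcInterior (D'.curve a b) = inv p '' arcInterior (D.curve a b) := by
    intro a b
    simp only [arcInterior, D', image_image]
  have hbod : ∀ a b, arcBody (D'.curve a b) = inv p '' arcBody (D.curve a b) := by
    intro a b
    simp only [arcBody, D', image_image]
  refine ⟨D', ⟨fun _ _ => mem_univ _, ?_, ?_, ?_, ?_, ?_⟩, ?_⟩
  · intro a ha b hb h
    exact hD.pos_inj ha hb (inv_inj p h)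
  · intro a b
    simp only [D']
    rw [hD.curve_symm a b]
  · intro a ha b hb hab
    obtain ⟨h1, h2, h3, h4⟩ := hD.arc a ha b hb hab
    refine ⟨?_, ?_, ?_, ?_⟩
    · refine (inv_cont p).comp h1 ?_
      intro t ht h
      exact hpE a b hab ⟨t, ht, h⟩
    · intro s hs t ht h
      exact h2 hs ht (inv_inj p h)
    · simp only [D', h3]
    · simp only [D', h4]
  · intro a ha b hb hab v hv h
    rw [hint] at h
    obtain ⟨x, hx, hxe⟩ := h
    have := inv_inj p hxe
    subst this
    exact hD.vertex_off_arc a ha b hb hab v hv hx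
  · intro a ha b hb x hx y hy hab hxy hne
    rw [hint, hint, ← image_inter (inv_inj p), hD.no_cross a ha b hb x hx y hy hab hxy hne,
      image_empty]
  · intro r c hc
    -- walk from p to q until the edge is hit
    let γ : ℝ → Pt := fun t => p + t • (q - p)
    have hγc : Continuous γ := by fun_prop
    let Z : Set ℝ := Icc 0 1 ∩ γ ⁻¹' arcBody (D.curve u w)
    have hZ : IsCompact Z := isCompact_Icc.inter_right
      ((hbody_compact u w huw).isClosed.preimage hγc)
    have hZne : Z.Nonempty := by
      refine ⟨1, by simp, ?_⟩
      have : γ 1 = q := by simp [γ]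
      rw [mem_preimage, this]
      exact ⟨1 / 2, ⟨by norm_num, by norm_num⟩, rfl⟩
    obtain ⟨t0, ht0, hmin⟩ := hZ.exists_isLeast hZne
    have ht0pos : 0 < t0 := by
      rcases eq_or_lt_of_le ht0.1.1 with h | h
      · exfalso
        have h2 := ht0.2
        rw [← h] at h2
        have : γ 0 = p := by simp [γ]
        rw [mem_preimage, this] at h2
        exact hpA h2
      · exact h
    have hγB : ∀ t ∈ Icc (0 : ℝ) 1, γ t ∈ Metric.ball q ε := by
      intro t ht
      have hconv := (convex_ball q ε) hpB (Metric.mem_ball_self hε)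
        (sub_nonneg.2 ht.2) ht.1 (by ring)
      have : γ t = (1 - t) • p + t • q := by
        simp only [γ, smul_sub, sub_smul, one_smul]
        abel
      rw [this]
      exact hconv
    have hpq : q - p ≠ 0 := by
      intro h
      have : q = p := sub_eq_zero.1 h
      exact hpA (this ▸ ⟨1 / 2, ⟨by norm_num, by norm_num⟩, rfl⟩)
    by_contra hne
    -- points of the segment avoid the cycle
    have hav : ∀ t ∈ Ioc 0 t0, inv p (γ t) ∉ cycleImage n D' c := by
      rintro t ht ⟨a, b, hab, hx⟩
      have hadj : G.Adj a b := c.adj_of_mem_edges hab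
      rw [hbod] at hx
      obtain ⟨x, hx, hxe⟩ := hx
      have := inv_inj p hxe
      subst this
      have := honly _ (hγB t ⟨ht.1.le, ht.2.trans ht0.1.2⟩) a b hadj hx
      rw [this] at hab
      exact hne hab
    have hmem : inv p (γ t0) ∈ drawingImage n G univ D' := by
      right
      simp only [mem_iUnion]
      refine ⟨u, w, mem_univ _, mem_univ _, huw, ?_⟩
      rw [hbod]
      exact ⟨_, ht0.2, rfl⟩
    rcases hc.2 _ hmem with h | h
    · exact hav t0 ⟨ht0pos, le_rfl⟩ h
    · refine bounded_contra _ ((fun t => inv p (γ t)) '' Ioc 0 t0) ?_ _ ?_ ?_ ?_ h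
      · apply isPreconnected_Ioc.image
        refine (inv_cont p).comp hγc.continuousOn ?_
        intro t ht h
        have h' : p + t • (q - p) = p := h
        simp only [add_eq_left, smul_eq_zero] at h'
        rcases h' with h' | h'
        · exact ht.1.ne' h'
        · exact hpq h'
      · exact ⟨t0, ⟨ht0pos, le_rfl⟩, rfl⟩
      · rintro _ ⟨t, ht, rfl⟩
        exact hav t ht
      · intro M
        have hN : 0 < ‖q - p‖ := norm_pos_iff.2 hpq
        let s := min t0 (1 / ((|M| + 1) * ‖q - p‖))
        have hs : 0 < s := lt_min ht0pos (by positivity)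
        refine ⟨_, ⟨s, ⟨hs, min_le_left _ _⟩, rfl⟩, ?_⟩
        simp only
        rw [inv_norm]
        have h1 : ‖γ s - p‖ = s * ‖q - p‖ := by
          simp only [γ, add_sub_cancel_left, norm_smul, Real.norm_eq_abs, abs_of_pos hs]
        rw [h1]
        have h2 : s * ‖q - p‖ ≤ 1 / (|M| + 1) := by
          calc s * ‖q - p‖ ≤ 1 / ((|M| + 1) * ‖q - p‖) * ‖q - p‖ := by
                gcongr
                exact min_le_right _ _
            _ = 1 / (|M| + 1) := by field_simp
        calc M ≤ |M| := le_abs_self M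
          _ < |M| + 1 := by linarith
          _ = (1 / (|M| + 1))⁻¹ := by rw [one_div, inv_inv]
          _ ≤ (s * ‖q - p‖)⁻¹ := by
            apply inv_anti₀ (by positivity) h2

/-- Integer coordinates used for six vertices. -/
def tab : Fin 6 → ℤ × ℤ
  | 0 => (-1, 20)
  | 1 => (-3, -9)
  | 2 => (-1, -1)
  | 3 => (1, -1)
  | 4 => (3, -9)
  | 5 => (1, 20)

/-- Orientation of a triple. -/
def det (i j k : Fin 6) : ℤ :=
  ((tab j).1 - (tab i).1) * ((tab k).2 - (tab i).2) -
    ((tab j).2 - (tab i).2) * ((tab k).1 - (tab i).1)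

/-- Point of the table in the plane. -/
noncomputable def tabP (i : Fin 6) : Pt := ((tab i).1, (tab i).2)

/-- Real orientation of a pair and a point. -/
noncomputable def detP (i j : Fin 6) (x : Pt) : ℝ :=
  (((tab j).1 : ℝ) - (tab i).1) * (x.2 - (tab i).2) -
    (((tab j).2 : ℝ) - (tab i).2) * (x.1 - (tab i).1)

/-- The straight segment. -/
noncomputable def seg (i j : Fin 6) (t : ℝ) : Pt := (1 - t) • tabP i + t • tabP j

theorem detP_tab (i j k : Fin 6) : detP i j (tabP k) = (det i j k : ℝ) := by
  simp [detP, tabP, det]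

theorem detP_seg (i j k l : Fin 6) (t : ℝ) :
    detP i j (seg k l t) = (1 - t) * (det i j k : ℝ) + t * (det i j l : ℝ) := by
  rw [← detP_tab, ← detP_tab]
  simp [detP, seg, tabP]
  ring

theorem det_self (i j : Fin 6) : det i j i = 0 ∧ det i j j = 0 := by
  constructor <;> simp only [det] <;> ring

theorem seg_zero (i j : Fin 6) (t : ℝ) : detP i j (seg i j t) = 0 := by
  rw [detP_seg, (det_self i j).1, (det_self i j).2]
  simp

theorem tab_inj : ∀ i j : Fin 6, tab i = tab j → i = j := by decide

theorem tab_gen : ∀ i j k : Fin 6, i ≠ j → k ≠ i → k ≠ j → det i j k ≠ 0 := by decide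

/-- Both points on one side of a line. -/
def SepD (i j k l : Fin 6) : Prop :=
  (0 ≤ det i j k ∧ 0 ≤ det i j l ∧ 0 < det i j k + det i j l) ∨
    (det i j k ≤ 0 ∧ det i j l ≤ 0 ∧ det i j k + det i j l < 0)

instance (i j k l : Fin 6) : Decidable (SepD i j k l) := by
  unfold SepD
  infer_instance

set_option maxRecDepth 100000 in
theorem tab_sep : ∀ i j k l : Fin 6, i ≠ j → k ≠ l → s(i, j) ≠ s(k, l) →
    s(i, j) ≠ s(1, 3) → s(k, l) ≠ s(1, 3) →
    SepD i j k l ∨ SepD k l i j ∨ ((i = 0 ∨ j = 0) ∧ (k = 5 ∨ l = 5)) ∨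
      ((i = 5 ∨ j = 5) ∧ (k = 0 ∨ l = 0)) := by decide

theorem sep_ne (i j k l : Fin 6) (h : SepD i j k l) (s t : ℝ) (ht : t ∈ Ioo (0 : ℝ) 1) :
    seg i j s ≠ seg k l t := by
  intro he
  have h1 := seg_zero i j s
  rw [he, detP_seg] at h1
  obtain ⟨t0, t1⟩ := ht
  rcases h with ⟨h2, h3, h4⟩ | ⟨h2, h3, h4⟩
  · have h2' : (0 : ℝ) ≤ det i j k := by exact_mod_cast h2
    have h3' : (0 : ℝ) ≤ det i j l := by exact_mod_cast h3
    have h4' : (0 : ℝ) < det i j k + det i j l := by exact_mod_cast h4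
    rcases h2'.eq_or_lt with h | h
    · rw [← h] at h1 h4'
      have := mul_pos t0 (by linarith : (0 : ℝ) < det i j l)
      linarith
    · have := mul_pos (sub_pos.2 t1) h
      have := mul_nonneg t0.le h3'
      linarith
  · have h2' : (det i j k : ℝ) ≤ 0 := by exact_mod_cast h2
    have h3' : (det i j l : ℝ) ≤ 0 := by exact_mod_cast h3
    have h4' : (det i j k + det i j l : ℝ) < 0 := by exact_mod_cast h4
    rcases h2'.eq_or_lt with h | h
    · rw [h] at h1 h4'
      have := mul_neg_of_pos_of_neg t0 (by linarith : (det i j l : ℝ) < 0)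
      linarith
    · have := mul_neg_of_pos_of_neg (sub_pos.2 t1) h
      have := mul_nonpos_of_nonneg_of_nonpos t0.le h3'
      linarith

theorem tabP_inj : Function.Injective tabP := by
  intro i j h
  apply tab_inj
  simp only [tabP, Prod.mk.injEq, Int.cast_inj] at h
  exact Prod.ext h.1 h.2

theorem seg_inj (i j : Fin 6) (hij : i ≠ j) : Function.Injective (seg i j) := by
  intro s t h
  have h1 : (s - t) • (tabP j - tabP i) = 0 := by
    have : seg i j s - seg i j t = (s - t) • (tabP j - tabP i) := by
      simp only [seg]
      module
    rw [← this, h, sub_self]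
  rcases smul_eq_zero.1 h1 with h | h
  · linarith
  · exact absurd (tabP_inj (sub_eq_zero.1 h)).symm hij

theorem rho_exists : ∀ a b : Fin 6, a ≠ b → a ≠ 0 → a ≠ 5 → b ≠ 0 → b ≠ 5 →
    ((Equiv.swap a 1).trans (Equiv.swap (Equiv.swap a 1 b) 3)) a = 1 ∧
    ((Equiv.swap a 1).trans (Equiv.swap (Equiv.swap a 1 b) 3)) b = 3 ∧
    ((Equiv.swap a 1).trans (Equiv.swap (Equiv.swap a 1 b) 3)) 0 = 0 ∧
    ((Equiv.swap a 1).trans (Equiv.swap (Equiv.swap a 1 b) 3)) 5 = 5 := by decide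

/-- A vertex which is extreme in direction `(σ, 1)` lies on every external cycle. -/
theorem extreme (G : SimpleGraph (Fin 6)) (D : RawDrawing 6) (ρ : Fin 6 ≃ Fin 6)
    (hpos : ∀ v, D.pos v = tabP (ρ v)) (hcur : ∀ u v, D.curve u v = seg (ρ u) (ρ v))
    (σ : ℤ) (m : Fin 6)
    (hm : ∀ k, k ≠ ρ m → (tab k).2 + σ * (tab k).1 < (tab (ρ m)).2 + σ * (tab (ρ m)).1)
    (r : Fin 6) (c : G.Walk r r) (hc : IsExternalCycle 6 G D c) : m ∈ c.support := by
  by_contra hms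
  let L : Pt → ℝ := fun x => x.2 + σ * x.1
  have hm' : ∀ k, k ≠ ρ m → L (tabP k) < L (tabP (ρ m)) := by
    intro k hk
    simp only [L, tabP]
    exact_mod_cast hm k hk
  have hL : ∀ x ∈ cycleImage 6 D c, L x < L (tabP (ρ m)) := by
    rintro x ⟨a, b, hab, t, ht, rfl⟩
    have ha : a ≠ m := fun h => hms (h ▸ c.fst_mem_support_of_mem_edges hab)
    have hb : b ≠ m := fun h => hms (h ▸ c.snd_mem_support_of_mem_edges hab)
    have h1 := hm' (ρ a) (fun h => ha (ρ.injective h))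
    have h2 := hm' (ρ b) (fun h => hb (ρ.injective h))
    rw [hcur]
    have h3 : L (seg (ρ a) (ρ b) t) = (1 - t) * L (tabP (ρ a)) + t * L (tabP (ρ b)) := by
      simp [L, seg]
      ring
    rw [h3]
    have ht1 : 0 ≤ 1 - t := sub_nonneg.2 ht.2
    rcases ht.1.eq_or_lt with h | h
    · rw [← h]
      linarith
    · have := mul_lt_mul_of_pos_left h2 h
      have := mul_le_mul_of_nonneg_left h1.le ht1
      linarith
  have hmem : tabP (ρ m) ∈ drawingImage 6 G univ D := by
    left
    exact ⟨m, mem_univ _, hpos m⟩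
  rcases hc.2 _ hmem with h | h
  · exact lt_irrefl _ (hL _ h)
  · refine bounded_contra _ ((fun t : ℝ => tabP (ρ m) + t • ((0, 1) : Pt)) '' Ici 0) ?_ _ ?_ ?_ ?_ h
    · exact isPreconnected_Ici.image _ (by fun_prop)
    · exact ⟨0, by simp, by simp⟩
    · rintro _ ⟨t, ht, rfl⟩ hx
      have h1 := hL _ hx
      have h2 : L (tabP (ρ m) + t • ((0, 1) : Pt)) = L (tabP (ρ m)) + t := by
        simp [L]
        ring
      simp only at h1
      rw [h2] at h1
      have : (0 : ℝ) ≤ t := ht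
      linarith
    · intro M
      refine ⟨_, ⟨|M| + ‖tabP (ρ m)‖ + 1, by simp only [mem_Ici]; positivity, rfl⟩, ?_⟩
      simp only
      have h1 := norm_sub_norm_le ((|M| + ‖tabP (ρ m)‖ + 1) • ((0, 1) : Pt)) (-tabP (ρ m))
      rw [norm_neg, sub_neg_eq_add, add_comm _ (tabP (ρ m)), norm_smul, Real.norm_of_nonneg
        (by positivity : (0 : ℝ) ≤ |M| + ‖tabP (ρ m)‖ + 1)] at h1
      have h2 : ‖((0, 1) : Pt)‖ = 1 := by simp [Prod.norm_def]
      rw [h2] at h1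
      have := le_abs_self M
      linarith

theorem six_case (G : SimpleGraph (Fin 6)) (hc : Cubic 6 G) (hvis : Visible 6 5 G) :
    ∃ D : RawDrawing 6, IsDrawing 6 G D ∧
      (∀ (r : Fin 6) (c : G.Walk r r), IsExternalCycle 6 G D c →
        ∀ v : Fin 6, ¬ CriticalFor 6 5 D c v) ∧
      (∀ u v x y : Fin 6, G.Adj u v → G.Adj x y → s(u, v) ≠ s(x, y) →
        (arcInterior (D.curve u v) ∩ arcInterior (D.curve x y)).Nonempty →
        ¬ CoevalEdges 6 5 u v x y ∧ (u = 0 ∨ v = 0 ∨ x = 0 ∨ y = 0)) := by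
  have h05 : ¬ G.Adj 0 5 := fun h => by
    have := (hvis 0 5 h).2
    simp at this
  -- a non-adjacent pair among the middle vertices
  obtain ⟨a, b, hab, ha0, ha5, hb0, hb5, hadj⟩ : ∃ a b : Fin 6, a ≠ b ∧ a ≠ 0 ∧ a ≠ 5 ∧ b ≠ 0 ∧
      b ≠ 5 ∧ ¬ G.Adj a b := by
    obtain ⟨a, -, -, -, -, -, ha, -, -⟩ := nb_exists 6 G hc 0
    by_contra! hall
    have ha0 : a ≠ 0 := ha.ne'
    have ha5 : a ≠ 5 := by
      rintro rfl
      exact h05 ha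
    have : ∀ a : Fin 6, a ≠ 0 → a ≠ 5 → ∃ p q r : Fin 6, p ≠ q ∧ p ≠ r ∧ q ≠ r ∧ a ≠ p ∧ a ≠ q ∧
      a ≠ r ∧ p ≠ 0 ∧ p ≠ 5 ∧ q ≠ 0 ∧ q ≠ 5 ∧ r ≠ 0 ∧ r ≠ 5 := by decide
    obtain ⟨p, q, r, h1, h2, h3, h4, h5, h6, h7, h8, h9, h10, h11, h12⟩ := this a ha0 ha5
    rcases nb_three 6 G hc a p q r h1 h2 h3 (hall a p h4 ha0 ha5 h7 h8)
      (hall a q h5 ha0 ha5 h9 h10) (hall a r h6 ha0 ha5 h11 h12) 0 ha.symm with h | h | h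
    · exact h7 h.symm
    · exact h9 h.symm
    · exact h11 h.symm
  obtain ⟨hρa, hρb, hρ0, hρ5⟩ := rho_exists a b hab ha0 ha5 hb0 hb5
  generalize ((Equiv.swap a 1).trans (Equiv.swap (Equiv.swap a 1 b) 3)) = ρ at *
  have hcoe : ∀ i, (0 : Fin 6) ∈ window 6 5 i → (5 : Fin 6) ∈ window 6 5 i → False := by
    intro i h1 h2
    have h3 := h1.2
    have h4 := h2.1
    simp at h3 h4
    omega
  have hne13 : ∀ u v, G.Adj u v → s(ρ u, ρ v) ≠ s(1, 3) := by
    intro u v huv h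
    rw [← hρa, ← hρb] at h
    rcases Sym2.eq_iff.1 h with ⟨h1, h2⟩ | ⟨h1, h2⟩
    · rw [ρ.injective h1, ρ.injective h2] at huv
      exact hadj huv
    · rw [ρ.injective h1, ρ.injective h2] at huv
      exact hadj huv.symm
  have hback0 : ∀ u, ρ u = 0 → u = 0 := fun u h => ρ.injective (h.trans hρ0.symm)
  have hback5 : ∀ u, ρ u = 5 → u = 5 := fun u h => ρ.injective (h.trans hρ5.symm)
  refine ⟨⟨fun v => tabP (ρ v), fun u v => seg (ρ u) (ρ v)⟩, ⟨?_, ?_, ?_, ?_⟩, ?_, ?_⟩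
  · exact tabP_inj.comp ρ.injective
  · intro u v
    funext t
    simp only [seg, sub_sub_cancel]
    exact add_comm _ _
  · intro u v huv
    refine ⟨?_, (seg_inj _ _ (fun h => huv.ne (ρ.injective h))).injOn, ?_, ?_⟩
    · unfold seg
      fun_prop
    · simp [seg]
    · simp [seg]
  · rintro u v huv w ⟨t, ht, hw⟩
    have hne : ρ u ≠ ρ v := fun h => huv.ne (ρ.injective h)
    have h0 : seg (ρ u) (ρ v) 0 = tabP (ρ u) := by simp [seg]
    have h1 : seg (ρ u) (ρ v) 1 = tabP (ρ v) := by simp [seg]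
    simp only at hw
    by_cases hwu : ρ w = ρ u
    · rw [hwu, ← h0] at hw
      exact ht.1.ne' (seg_inj _ _ hne hw)
    by_cases hwv : ρ w = ρ v
    · rw [hwv, ← h1] at hw
      exact ht.2.ne (seg_inj _ _ hne hw)
    have h2 := seg_zero (ρ u) (ρ v) t
    rw [hw, detP_tab] at h2
    exact tab_gen _ _ _ hne hwu hwv (by exact_mod_cast h2)
  · intro r c hext v hcrit
    have e0 := extreme G _ ρ (fun _ => rfl) (fun _ _ => rfl) (-1) 0
      (by rw [hρ0]; decide) r c hext
    have e5 := extreme G _ ρ (fun _ => rfl) (fun _ _ => rfl) 1 5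
      (by rw [hρ5]; decide) r c hext
    obtain ⟨⟨i, -, -, -, hs⟩, -⟩ := hcrit
    exact hcoe i (hs 0 e0) (hs 5 e5)
  · rintro u v x y huv hxy hne ⟨p, ⟨s, hs, rfl⟩, ⟨t, ht, hst⟩⟩
    simp only at hst
    have hne' : s(ρ u, ρ v) ≠ s(ρ x, ρ y) := by
      intro h
      apply hne
      rcases Sym2.eq_iff.1 h with ⟨h1, h2⟩ | ⟨h1, h2⟩
      · rw [ρ.injective h1, ρ.injective h2]
      · rw [ρ.injective h1, ρ.injective h2, Sym2.eq_swap]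
    rcases tab_sep (ρ u) (ρ v) (ρ x) (ρ y) (fun h => huv.ne (ρ.injective h))
      (fun h => hxy.ne (ρ.injective h)) hne' (hne13 u v huv) (hne13 x y hxy) with h | h | h | h
    · exact absurd hst.symm (sep_ne _ _ _ _ h s t ht)
    · exact absurd hst (sep_ne _ _ _ _ h t s hs)
    · have h1 : u = 0 ∨ v = 0 := h.1.imp (hback0 u) (hback0 v)
      have h2 : x = 5 ∨ y = 5 := h.2.imp (hback5 x) (hback5 y)
      refine ⟨?_, by tauto⟩
      rintro ⟨i, -, -, hu, hv, hx, hy⟩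
      rcases h1 with rfl | rfl <;> rcases h2 with rfl | rfl <;> exact hcoe i (by assumption) (by assumption)
    · have h1 : u = 5 ∨ v = 5 := h.1.imp (hback5 u) (hback5 v)
      have h2 : x = 0 ∨ y = 0 := h.2.imp (hback0 x) (hback0 y)
      refine ⟨?_, by tauto⟩
      rintro ⟨i, -, -, hu, hv, hx, hy⟩
      rcases h1 with rfl | rfl <;> rcases h2 with rfl | rfl <;> exact hcoe i (by assumption) (by assumption)

/-- **Claim 1 in the appendix.** Let `G` be an `n`-vertex planar
triconnected cubic graph with `n ≥ 6` and all edges visible for window size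
`ω = 5`.  Then there exists an embedding `φ'` of `G` (crossings interpreted as
dummy vertices) such that (i) the external cycle of `φ'` is not a critical
cycle, and (ii) any two crossing edges of `φ'` are not coeval and one of them
is incident to `v₁`. -/
theorem exists_embedding_external_not_critical
    (n : ℕ) (G : SimpleGraph (Fin n)) (hn : 6 ≤ n)
    (hplanar : PlanarGraph n G) (h3 : ThreeConnected n G) (hcubic : Cubic n G)
    (hvis : Visible n 5 G) :
    ∃ D : RawDrawing n, IsDrawing n G D ∧
      (∀ (r : Fin n) (c : G.Walk r r), IsExternalCycle n G D c →
        ∀ v : Fin n, ¬ CriticalFor n 5 D c v) ∧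
      (∀ u v x y : Fin n, G.Adj u v → G.Adj x y → s(u, v) ≠ s(x, y) →
        (arcInterior (D.curve u v) ∩ arcInterior (D.curve x y)).Nonempty →
        ¬ CoevalEdges n 5 u v x y ∧
          (u = ⟨0, by omega⟩ ∨ v = ⟨0, by omega⟩ ∨
           x = ⟨0, by omega⟩ ∨ y = ⟨0, by omega⟩)) := by
  by_cases h6 : n = 6
  · subst h6
    exact six_case G hcubic hvis
  · obtain ⟨u, w, huw, hun⟩ := exists_uncov n G (by omega) h3 hcubic hvis
    obtain ⟨D, hD⟩ := hplanar
    obtain ⟨D', hD', hext⟩ := redraw n G D hD u w huw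
    refine ⟨D', ⟨?_, hD'.curve_symm, ?_, ?_⟩, ?_, ?_⟩
    · exact injOn_univ.1 hD'.pos_inj
    · exact fun a b hab => hD'.arc a (mem_univ _) b (mem_univ _) hab
    · exact fun a b hab v => hD'.vertex_off_arc a (mem_univ _) b (mem_univ _) hab v (mem_univ _)
    · rintro r c hc v ⟨hco, hv, -⟩
      exact hun (cov_of_cycle n G r c hc.1 v hco hv u w (hext r c hc))
    · intro a b x y hab hxy hne hcross
      have := hD'.no_cross a (mem_univ _) b (mem_univ _) x (mem_univ _) y (mem_univ _) hab hxy hne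
      rw [this] at hcross
      exact absurd hcross not_nonempty_empty

end GraphStories
end
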